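/- Let n ≥ 1, let p ∈ (−n−1, 1), and let K be a smooth, strictly convex body in ℝ^{n+1} with positive support function h. If det(A(x) + x⊗x) = h(x)^{p−1} for all x ∈ S^n (equivalently, 𝒦 = h^{1−p}), then K is the closed unit ball; equivalently h_K(z) = ‖z‖ for all z ∈ ℝ^{n+1}. -/

import Mathlib

open MeasureTheory Metric Real
open scoped InnerProductSpace ENNReal Topology

noncomputable section

/-- Euclidean space `ℝ^{n+1}`. -/
abbrev Eu (n : ℕ) : Type := EuclideanSpace ℝ (Fin (n + 1))

/-- The unit sphere `S^n ⊆ ℝ^{n+1}` as a subtype. -/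
abbrev Sph (n : ℕ) : Type := Metric.sphere (0 : Eu n) 1

/-- The spherical Lebesgue (surface) measure on `S^n`. -/
def sphMeas (n : ℕ) : Measure (Sph n) := (volume : Measure (Eu n)).toSphere

/-- The support function of a set `K ⊆ ℝ^{n+1}`. -/
def sfn {n : ℕ} (K : Set (Eu n)) (z : Eu n) : ℝ :=
  sSup ((fun y => ⟪z, y⟫_ℝ) '' K)

/-- The Hessian endomorphism `A(x) = D(∇ h_K)(x)`. -/
def hessA {n : ℕ} (K : Set (Eu n)) (x : Eu n) : Eu n →L[ℝ] Eu n :=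
  fderiv ℝ (gradient (sfn K)) x

/-- The rank-one endomorphism `x ⊗ x : v ↦ ⟨v, x⟩ x`. -/
def tens {n : ℕ} (x : Eu n) : Eu n →L[ℝ] Eu n :=
  (innerSL ℝ x).smulRight x

/-- `det (A(x) + x ⊗ x)`, the reciprocal Gauss curvature `1/𝒦` at `x ∈ S^n`. -/
def rK {n : ℕ} (K : Set (Eu n)) (x : Eu n) : ℝ :=
  LinearMap.det ((hessA K x + tens x : Eu n →L[ℝ] Eu n) : Eu n →ₗ[ℝ] Eu n)

/-- `K` is a smooth, strictly convex body with positive support function. -/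
structure IsSmoothConvexBody {n : ℕ} (K : Set (Eu n)) : Prop where
  compact : IsCompact K
  convex : Convex ℝ K
  interior_nonempty : (interior K).Nonempty
  pos : ∀ x : Sph n, 0 < sfn K x
  smooth : ContDiffOn ℝ (⊤ : ℕ∞) (sfn K) {(0 : Eu n)}ᶜ
  posdef : ∀ x : Sph n, ∀ v : Eu n, v ≠ 0 →
    0 < ⟪(hessA K (x : Eu n) + tens (x : Eu n)) v, v⟫_ℝ

/-- The density `h·det(A + x⊗x)` of the measure `dV` with respect to `dθ`. -/
def dens {n : ℕ} (K : Set (Eu n)) (x : Eu n) : ℝ := sfn K x * rK K x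

/-- The centroid-type point `c(K) = (∫ ∇h_K dV)/(∫ dV)`. -/
def cK {n : ℕ} (K : Set (Eu n)) : Eu n :=
  (∫ x : Sph n, dens K x ∂sphMeas n)⁻¹ •
    ∫ x : Sph n, dens K x • gradient (sfn K) x ∂sphMeas n

/-- The support function of the translated body `K - c(K)`. -/
def tsfn {n : ℕ} (K : Set (Eu n)) (x : Eu n) : ℝ := sfn K x - ⟪x, cK K⟫_ℝ

/-! In an orthonormal frame of the tangent space at `x ∈ S^n` the hypothesis is the Monge–Ampère
equation `det D²h = h ^ (p - 1)`, and it suffices to show that `∇h` is radial: then `h` is constant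
on the sphere, and the equation makes the constant `1`.

For `n ≥ 2` the maximum principle is applied to a function homogeneous of degree zero, namely
`h Δh - (n - 1 + p) / 2 |∇h|²` if `p < 1 - n`, and `h λ - (n - 1 + p) / (2 n) |∇h|²`, with `λ` the
largest principal radius, if `1 - n ≤ p`. Differentiating the equation twice controls the fourth
derivatives of `h`, and the tests at a maximum reduce to the statement that a positive multiple of
the squared tangential gradient of `h` is nonpositive. To avoid differentiating `λ`, the second
function is viewed as a function of a pair of unit vectors `(x, v)`. The estimate survives a small
perturbation, so a Hopf barrier spreads the maximum, and with it the vanishing of the tangential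
gradient, over the whole sphere.

For `n = 1` the restriction `u` of `h` to the unit circle is a `2π`-periodic solution of
`u'' + u = u ^ (p - 1)`. If `u` is not constant, let its maximum be at `0`, and let `b` be the next
zero of `u'`. Sturm comparison of `u'` with `sin t` gives `b < π`, and of `u u'` with `sin (2 t)`
gives `b > π / 2`. The function `u'` is odd about each of its zeros, so by periodicity it vanishes
at `π`, hence at `2 b - π`, which lies between `0` and `b`. -/

/-- The directional derivative of `f` along a constant vector field `v`, as a function of the base
point, so that it can be iterated. It is written `∂[v] f`. -/
def dirDeriv {E : Type*} [NormedAddCommGroup E] [NormedSpace ℝ E] (v : E) (f : E → ℝ) (x : E) : ℝ :=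
  fderiv ℝ f x v

local notation:max "∂[" v "]" => dirDeriv v

section DirectionalDerivative

variable {E : Type*} [NormedAddCommGroup E] [NormedSpace ℝ E] {f g : E → ℝ} {d : ℤ} {x v : E}

/-- Smoothness of `f` on the complement of the origin, the regularity of a support function. -/
def SmoothOffZero (f : E → ℝ) : Prop := ContDiffOn ℝ (⊤ : ℕ∞) f {0}ᶜ

/-- Positive homogeneity of integer degree `d`, away from the origin. -/
def PosHomogeneous (d : ℤ) (f : E → ℝ) : Prop :=
  ∀ x : E, x ≠ 0 → ∀ t : ℝ, 0 < t → f (t • x) = t ^ d * f x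

lemma SmoothOffZero.contDiffAt (hf : SmoothOffZero f) (hx : x ≠ 0) :
    ContDiffAt ℝ (⊤ : ℕ∞) f x :=
  ContDiffOn.contDiffAt hf (isOpen_compl_singleton.mem_nhds hx)

lemma SmoothOffZero.differentiableAt (hf : SmoothOffZero f) (hx : x ≠ 0) :
    DifferentiableAt ℝ f x :=
  (hf.contDiffAt hx).differentiableAt (by simp)

lemma SmoothOffZero.differentiableAt_fderiv (hf : SmoothOffZero f) (hx : x ≠ 0) :
    DifferentiableAt ℝ (fderiv ℝ f) x :=
  ((hf.contDiffAt hx).fderiv_right (m := (⊤ : ℕ∞)) (by simp)).differentiableAt (by simp)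

lemma SmoothOffZero.continuousOn (hf : SmoothOffZero f) : ContinuousOn f {0}ᶜ :=
  ContDiffOn.continuousOn hf

lemma SmoothOffZero.dirDeriv (hf : SmoothOffZero f) (v : E) : SmoothOffZero (∂[v] f) := by
  intro x hx
  have hfderiv : ContDiffAt ℝ (⊤ : ℕ∞) (fderiv ℝ f) x := (hf.contDiffAt hx).fderiv_right (by simp)
  exact (hfderiv.clm_apply contDiffAt_const).contDiffWithinAt

lemma dirDeriv_add_dir (v w : E) (f : E → ℝ) (x : E) : ∂[v + w] f x = ∂[v] f x + ∂[w] f x :=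
  map_add _ v w

lemma dirDeriv_smul_dir (c : ℝ) (v : E) (f : E → ℝ) (x : E) : ∂[c • v] f x = c * ∂[v] f x :=
  map_smul (fderiv ℝ f x) c v

lemma dirDeriv_sum_dir {ι : Type*} (s : Finset ι) (v : ι → E) (f : E → ℝ) (x : E) :
    ∂[∑ i ∈ s, v i] f x = ∑ i ∈ s, ∂[v i] f x :=
  map_sum _ v s

lemma dirDeriv_congr_of_ne_zero (hx : x ≠ 0) (h : ∀ y, y ≠ 0 → f y = g y) (v : E) :
    ∂[v] f x = ∂[v] g x := by
  have hfg : f =ᶠ[𝓝 x] g := Filter.eventuallyEq_of_mem (isOpen_compl_singleton.mem_nhds hx) h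
  rw [dirDeriv, dirDeriv, hfg.fderiv_eq]

lemma SmoothOffZero.dirDeriv_dirDeriv_eq_fderiv (hf : SmoothOffZero f) (v w : E) (hx : x ≠ 0) :
    ∂[v] (∂[w] f) x = fderiv ℝ (fderiv ℝ f) x v w := by
  unfold _root_.dirDeriv
  rw [fderiv_clm_apply (hf.differentiableAt_fderiv hx) (differentiableAt_const w)]
  simp

lemma SmoothOffZero.dirDeriv_comm (hf : SmoothOffZero f) (v w : E) (hx : x ≠ 0) :
    ∂[v] (∂[w] f) x = ∂[w] (∂[v] f) x := by
  have hsymm : IsSymmSndFDerivAt ℝ f x := by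
    refine (hf.contDiffAt hx).isSymmSndFDerivAt ?_
    rw [minSmoothness_of_isRCLikeNormedField]
    exact WithTop.coe_le_coe.2 le_top
  rw [hf.dirDeriv_dirDeriv_eq_fderiv v w hx, hf.dirDeriv_dirDeriv_eq_fderiv w v hx]
  exact hsymm v w

lemma SmoothOffZero.hasDerivAt_line (hf : SmoothOffZero f) {t : ℝ} (h : x + t • v ≠ 0) :
    HasDerivAt (fun s : ℝ => f (x + s • v)) (∂[v] f (x + t • v)) t := by
  have hline : HasDerivAt (fun s : ℝ => x + s • v) v t := by
    simpa using ((hasDerivAt_id t).smul_const v).const_add x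
  exact (hf.differentiableAt h).hasFDerivAt.comp_hasDerivAt t hline

lemma PosHomogeneous.dirDeriv_self (h : PosHomogeneous d f) (hf : SmoothOffZero f) (hx : x ≠ 0) :
    ∂[x] f x = d * f x := by
  have hray : HasDerivAt (fun t : ℝ => f (t • x)) (∂[x] f x) 1 := by
    have hsmul : HasDerivAt (fun t : ℝ => t • x) x 1 := by
      simpa using (hasDerivAt_id (1 : ℝ)).smul_const x
    have hfx : HasFDerivAt f (fderiv ℝ f x) ((1 : ℝ) • x) := by
      simpa using (hf.differentiableAt hx).hasFDerivAt
    exact hfx.comp_hasDerivAt 1 hsmul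
  have hpow : HasDerivAt (fun t : ℝ => t ^ d * f x) (d * f x) 1 := by
    simpa using (hasDerivAt_zpow d (1 : ℝ) (Or.inl one_ne_zero)).mul_const (f x)
  have heq : (fun t : ℝ => t ^ d * f x) =ᶠ[𝓝 1] fun t : ℝ => f (t • x) := by
    filter_upwards [lt_mem_nhds (zero_lt_one (α := ℝ))] with t ht using (h x hx t ht).symm
  exact (hray.congr_of_eventuallyEq heq).unique hpow

lemma PosHomogeneous.dirDeriv (h : PosHomogeneous d f) (hf : SmoothOffZero f) (v : E) :
    PosHomogeneous (d - 1) (∂[v] f) := by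
  intro x hx t ht
  have heq : (fun y : E => f (t • y)) =ᶠ[𝓝 x] fun y : E => t ^ d * f y := by
    filter_upwards [isOpen_compl_singleton.mem_nhds hx] with y hy using h y hy t ht
  have hv := DFunLike.congr_fun (heq.fderiv_eq (𝕜 := ℝ)) v
  rw [fderiv_comp_smul t, fderiv_const_mul (hf.differentiableAt hx)] at hv
  simp only [smul_apply, smul_eq_mul] at hv
  unfold _root_.dirDeriv
  rw [zpow_sub_one₀ ht.ne']
  field_simp
  linarith

lemma deriv_deriv_nonpos_of_isLocalMax {u u' : ℝ → ℝ} {a c : ℝ}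
    (hu : ∀ᶠ t in 𝓝 a, HasDerivAt u (u' t) t) (hu' : HasDerivAt u' c a) (hmax : IsLocalMax u a) :
    c ≤ 0 := by
  by_contra! hc
  have hderiv : deriv u =ᶠ[𝓝 a] u' := hu.mono fun t ht => ht.deriv
  have hmin : IsLocalMin u a := by
    refine isLocalMin_of_deriv_deriv_pos ?_ hmax.deriv_eq_zero hu.self_of_nhds.continuousAt
    rwa [hderiv.deriv_eq, hu'.deriv]
  have hconst : u =ᶠ[𝓝 a] fun _ => u a := by
    filter_upwards [hmin, hmax] with t htmin htmax using le_antisymm htmax htmin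
  have hzero : u' =ᶠ[𝓝 a] fun _ => 0 := by
    filter_upwards [hconst.eventuallyEq_nhds, hderiv] with t ht ht'
    rw [← ht', ht.deriv_eq, deriv_const]
  exact hc.ne (((hasDerivAt_const a (0 : ℝ)).congr_of_eventuallyEq hzero).unique hu')

end DirectionalDerivative

section Determinant

open Matrix

variable {m : Type*} [Fintype m] [DecidableEq m]

lemma det_add_vecMulVec_single (A : Matrix m m ℝ) (i : m) :
    (A + vecMulVec (Pi.single i 1) (Pi.single i 1)).det = A.det + A.adjugate i i := by
  have hrow : A + vecMulVec (Pi.single i 1) (Pi.single i 1)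
      = A.updateRow i (A i + Pi.single i 1) := by
    ext j k
    rcases eq_or_ne j i with rfl | hj
    · simp [vecMulVec_apply]
    · simp [vecMulVec_apply, hj]
  rw [hrow, det_updateRow_add, updateRow_eq_self, adjugate_apply]

lemma det_add_vecMulVec_of_mulVec_eq_zero {A : Matrix m m ℝ} (hA : A.IsSymm) {c : m → ℝ}
    (hAc : A *ᵥ c = 0) (hc : c ⬝ᵥ c = 1) (z : m → ℝ) :
    (A + vecMulVec z z).det = (z ⬝ᵥ c) ^ 2 * (A + vecMulVec c c).det := by
  -- The congruence by `P` fixes `A`, because `A c = 0`, and sends `c cᵀ` to `z zᵀ`.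
  set P : Matrix m m ℝ := 1 + vecMulVec c (z - c) with hP
  have hAP : A * P = A := by rw [hP, mul_add, mul_one, mul_vecMulVec, hAc]; simp
  have hPA : Pᵀ * A = A := by
    have htranspose := congrArg transpose hAP
    rwa [transpose_mul, hA.eq] at htranspose
  have hPc : Pᵀ *ᵥ c = z := by
    rw [hP, transpose_add, transpose_one, transpose_vecMulVec, add_mulVec, one_mulVec,
      vecMulVec_mulVec, hc]
    simp
  have hdet : P.det = z ⬝ᵥ c := by
    rw [hP, vecMulVec_eq Unit, det_one_add_replicateCol_mul_replicateRow, sub_dotProduct, hc]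
    ring
  have hcongr : Pᵀ * (A + vecMulVec c c) * P = A + vecMulVec z z := by
    rw [mul_add Pᵀ A, add_mul, hPA, hAP, mul_vecMulVec, hPc, vecMulVec_mul, ← mulVec_transpose, hPc]
  rw [← hcongr, det_mul, det_mul, det_transpose, hdet]
  ring

lemma det_submatrix_succ_of_mulVec_eq_zero {n : ℕ} {A : Matrix (Fin (n + 1)) (Fin (n + 1)) ℝ}
    (hA : A.IsSymm) {c : Fin (n + 1) → ℝ} (hAc : A *ᵥ c = 0) (hc : c ⬝ᵥ c = 1) :
    (A.submatrix Fin.succ Fin.succ).det = c 0 ^ 2 * (A + vecMulVec c c).det := by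
  have hc0 : c ≠ 0 := by rintro rfl; simp at hc
  have hdet : A.det = 0 := exists_mulVec_eq_zero_iff.1 ⟨c, hc0, hAc⟩
  have hminor : A.adjugate 0 0 = (A.submatrix Fin.succ Fin.succ).det := by
    simp [adjugate_fin_succ_eq_det_submatrix, Fin.succAbove_zero]
  have hz := det_add_vecMulVec_of_mulVec_eq_zero hA hAc hc (Pi.single 0 1)
  rwa [det_add_vecMulVec_single, hdet, zero_add, hminor, single_one_dotProduct] at hz

end Determinant

section Hessian

variable {E : Type*} [NormedAddCommGroup E] [InnerProductSpace ℝ E] {f : E → ℝ} {x : E}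

lemma inner_gradient [CompleteSpace E] (f : E → ℝ) (x v : E) : ⟪gradient f x, v⟫_ℝ = ∂[v] f x := by
  simp [gradient, dirDeriv]

lemma SmoothOffZero.inner_fderiv_gradient [CompleteSpace E] (hf : SmoothOffZero f) (hx : x ≠ 0)
    (v w : E) : ⟪fderiv ℝ (gradient f) x v, w⟫_ℝ = ∂[v] (∂[w] f) x := by
  have hgrad : DifferentiableAt ℝ (gradient f) x :=
    (InnerProductSpace.toDual ℝ E).symm.toContinuousLinearEquiv.differentiableAt.comp x
      (hf.differentiableAt_fderiv hx)
  have hw : ∂[w] f = fun y => ⟪gradient f y, w⟫_ℝ := funext fun y => (inner_gradient f y w).symm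
  rw [hw, _root_.dirDeriv, fderiv_inner_apply ℝ hgrad (differentiableAt_const w)]
  simp

/-- The Hessian of `f` at `x` in the frame `b`. -/
def hessianMatrix {ι : Type*} (f : E → ℝ) (b : ι → E) (x : E) : Matrix ι ι ℝ :=
  Matrix.of fun i j => ∂[b i] (∂[b j] f) x

lemma hessianMatrix_apply {ι : Type*} (f : E → ℝ) (b : ι → E) (x : E) (i j : ι) :
    hessianMatrix f b x i j = ∂[b i] (∂[b j] f) x :=
  rfl

lemma SmoothOffZero.isSymm_hessianMatrix {ι : Type*} (hf : SmoothOffZero f) (b : ι → E)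
    (hx : x ≠ 0) : (hessianMatrix f b x).IsSymm :=
  Matrix.IsSymm.ext fun _ _ => hf.dirDeriv_comm _ _ hx

lemma dirDeriv_eq_sum {ι : Type*} [Fintype ι] (b : OrthonormalBasis ι ℝ E) (v : E) (f : E → ℝ)
    (x : E) : ∂[v] f x = ∑ i, ⟪b i, v⟫_ℝ * ∂[b i] f x := by
  conv_lhs => rw [← b.sum_repr' v]
  simp only [dirDeriv_sum_dir, dirDeriv_smul_dir]

lemma PosHomogeneous.dirDeriv_dirDeriv_self (h : PosHomogeneous 1 f) (hf : SmoothOffZero f)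
    (v : E) (hx : x ≠ 0) : ∂[v] (∂[x] f) x = 0 := by
  rw [hf.dirDeriv_comm _ _ hx, (h.dirDeriv hf v).dirDeriv_self (hf.dirDeriv v) hx]
  simp

lemma PosHomogeneous.dirDeriv_self_dirDeriv (h : PosHomogeneous 1 f) (hf : SmoothOffZero f)
    (v : E) (hx : x ≠ 0) : ∂[x] (∂[v] f) x = 0 := by
  rw [hf.dirDeriv_comm _ _ hx, h.dirDeriv_dirDeriv_self hf v hx]

lemma PosHomogeneous.hessianMatrix_mulVec_eq_zero {ι : Type*} [Fintype ι] (h : PosHomogeneous 1 f)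
    (hf : SmoothOffZero f) (b : OrthonormalBasis ι ℝ E) (hx : x ≠ 0) :
    (hessianMatrix f b x).mulVec (fun i => ⟪b i, x⟫_ℝ) = 0 := by
  ext i
  have hrad := h.dirDeriv_self_dirDeriv hf (b i) hx
  rw [dirDeriv_eq_sum b x] at hrad
  rw [Pi.zero_apply, ← hrad]
  refine Finset.sum_congr rfl fun j _ => ?_
  simp only [hessianMatrix_apply, hf.dirDeriv_comm (b i) (b j) hx, mul_comm]

lemma PosHomogeneous.hessianMatrix_smul {ι : Type*} (h : PosHomogeneous 1 f)
    (hf : SmoothOffZero f) (b : ι → E) (hx : x ≠ 0) {t : ℝ} (ht : 0 < t) :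
    hessianMatrix f b (t • x) = t⁻¹ • hessianMatrix f b x := by
  ext i j
  have hij := ((h.dirDeriv hf (b j)).dirDeriv (hf.dirDeriv (b j)) (b i)) x hx t ht
  simpa [hessianMatrix_apply] using hij

end Hessian

section MongeAmpere

variable {n : ℕ} {p : ℝ} {H : Eu n → ℝ}

/-- Abstract form of the equation satisfied by the support function `H`. The determinant of the
Hessian plus the radial projection is encoded through the principal minors of the Hessian: `b` may
be any orthonormal basis, and its vector `b 0` is the one left out. -/
structure IsMongeAmpereSolution (p : ℝ) (H : Eu n → ℝ) : Prop where
  smooth : SmoothOffZero H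
  posHomogeneous : PosHomogeneous 1 H
  pos : ∀ {x : Eu n}, x ≠ 0 → 0 < H x
  posDef : ∀ {x v : Eu n}, ‖x‖ = 1 → ⟪x, v⟫_ℝ = 0 → v ≠ 0 → 0 < ∂[v] (∂[v] H) x
  det_eq : ∀ (b : OrthonormalBasis (Fin (n + 1)) ℝ (Eu n)) {x : Eu n}, ‖x‖ = 1 →
    (hessianMatrix H (b ∘ Fin.succ) x).det = ⟪b 0, x⟫_ℝ ^ 2 * H x ^ (p - 1)

lemma IsMongeAmpereSolution.det_eq_of_inner_eq_one (hH : IsMongeAmpereSolution p H)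
    (b : OrthonormalBasis (Fin (n + 1)) ℝ (Eu n)) {x : Eu n} (hx : ⟪b 0, x⟫_ℝ = 1) :
    (hessianMatrix H (b ∘ Fin.succ) x).det = H x ^ (p - 1) * ‖x‖ ^ (-((n : ℝ) + 1 + p)) := by
  have hx0 : x ≠ 0 := by rintro rfl; simp at hx
  have hr : 0 < ‖x‖ := norm_pos_iff.2 hx0
  set r := ‖x‖
  have hscale := hH.posHomogeneous.hessianMatrix_smul hH.smooth (b ∘ Fin.succ) hx0 (inv_pos.2 hr)
  have hdet := hH.det_eq b (x := r⁻¹ • x) (by rw [norm_smul, norm_inv, norm_norm]; field_simp)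
  rw [hscale, inv_inv, Matrix.det_smul, Fintype.card_fin, inner_smul_right, hx, mul_one,
    hH.posHomogeneous x hx0 _ (inv_pos.2 hr), zpow_one,
    Real.mul_rpow (inv_pos.2 hr).le (hH.pos hx0).le] at hdet
  have hpow : r ^ (-((n : ℝ) + 1 + p)) = (r ^ n)⁻¹ * (r⁻¹ ^ 2 * r⁻¹ ^ (p - 1)) := by
    rw [← Real.rpow_natCast, ← Real.rpow_natCast, ← Real.rpow_neg hr.le, ← Real.rpow_add
      (inv_pos.2 hr), Real.inv_rpow hr.le, ← Real.rpow_neg hr.le, ← Real.rpow_add hr]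
    congr 1
    push_cast
    ring
  rw [hpow, eq_comm, ← mul_right_inj' (pow_pos hr n).ne', hdet]
  field_simp

end MongeAmpere

section SupportFunction

variable {n : ℕ} {K : Set (Eu n)}

open scoped Pointwise in
lemma posHomogeneous_sfn (K : Set (Eu n)) : PosHomogeneous 1 (sfn K) := by
  intro x _ t ht
  have himage : (fun y => ⟪t • x, y⟫_ℝ) '' K = t • ((fun y => ⟪x, y⟫_ℝ) '' K) := by
    ext r
    simp [Set.mem_smul_set, inner_smul_left]
  rw [sfn, himage, Real.sSup_smul_of_nonneg ht.le, zpow_one, smul_eq_mul, sfn]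

lemma IsSmoothConvexBody.sfn_pos (hK : IsSmoothConvexBody K) {x : Eu n} (hx : x ≠ 0) :
    0 < sfn K x := by
  have hunit := hK.pos ⟨‖x‖⁻¹ • x, by simp [norm_smul, hx]⟩
  rw [posHomogeneous_sfn K x hx _ (by positivity), zpow_one] at hunit
  exact (mul_pos_iff_of_pos_left (by positivity)).1 hunit

lemma det_hessianMatrix_add_vecMulVec (hK : SmoothOffZero (sfn K)) {ι : Type*} [Fintype ι]
    [DecidableEq ι] (b : OrthonormalBasis ι ℝ (Eu n)) {x : Eu n} (hx : x ≠ 0) :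
    (hessianMatrix (sfn K) b x
      + Matrix.vecMulVec (fun i => ⟪b i, x⟫_ℝ) (fun i => ⟪b i, x⟫_ℝ)).det = rK K x := by
  rw [rK, ← LinearMap.det_toMatrix b.toBasis]
  congr 1
  ext i j
  have hhess : ⟪b i, hessA K x (b j)⟫_ℝ = ∂[b i] (∂[b j] (sfn K)) x := by
    rw [real_inner_comm, hessA, hK.inner_fderiv_gradient hx, hK.dirDeriv_comm _ _ hx]
  have htens : ⟪b i, tens x (b j)⟫_ℝ = ⟪b i, x⟫_ℝ * ⟪b j, x⟫_ℝ := by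
    simp [tens, inner_smul_right, real_inner_comm x (b j), mul_comm]
  simp [LinearMap.toMatrix_apply, OrthonormalBasis.repr_apply_apply, Matrix.vecMulVec_apply,
    hessianMatrix_apply, hhess, htens]

lemma IsSmoothConvexBody.isMongeAmpereSolution {p : ℝ} (hK : IsSmoothConvexBody K)
    (heq : ∀ x : Sph n, rK K (x : Eu n) = sfn K (x : Eu n) ^ (p - 1)) :
    IsMongeAmpereSolution p (sfn K) where
  smooth := hK.smooth
  posHomogeneous := posHomogeneous_sfn K
  pos := hK.sfn_pos
  posDef {x v} hx hxv hv := by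
    have hx0 : x ≠ 0 := by rintro rfl; simp at hx
    have hpos := hK.posdef ⟨x, by simp [hx]⟩ v hv
    rw [add_apply, inner_add_left, hessA,
      SmoothOffZero.inner_fderiv_gradient hK.smooth hx0] at hpos
    simpa [tens, inner_smul_left, hxv] using hpos
  det_eq b {x} hx := by
    have hx0 : x ≠ 0 := by rintro rfl; simp at hx
    have hsmooth : SmoothOffZero (sfn K) := hK.smooth
    have hcoords : (fun i => ⟪b i, x⟫_ℝ) ⬝ᵥ (fun i => ⟪b i, x⟫_ℝ) = 1 := by
      have hparseval := b.sum_sq_inner_right x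
      simpa only [dotProduct, hx, mul_one, sq] using hparseval
    have hminor := det_submatrix_succ_of_mulVec_eq_zero (hsmooth.isSymm_hessianMatrix b hx0)
      ((posHomogeneous_sfn K).hessianMatrix_mulVec_eq_zero hsmooth b hx0) hcoords
    rw [det_hessianMatrix_add_vecMulVec hsmooth b hx0] at hminor
    rw [← heq ⟨x, by simp [hx]⟩]
    exact hminor

end SupportFunction

section LogDet

open Matrix

variable {m : Type*} [Fintype m] [DecidableEq m] {S : ℝ → Matrix m m ℝ} {S₁ : Matrix m m ℝ} {t : ℝ}

lemma hasDerivAt_det (h : ∀ i j, HasDerivAt (fun s => S s i j) (S₁ i j) t) :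
    HasDerivAt (fun s => (S s).det) ((S t).adjugate * S₁).trace t := by
  have hcol (i : m) :
      ((S t).adjugate * S₁) i i = ((S t).updateCol i fun k => S₁ k i).det := by
    rw [← cramer_apply, cramer_eq_adjugate_mulVec]
    rfl
  have hprod (σ : Equiv.Perm m) : HasDerivAt
      (fun s => ((Equiv.Perm.sign σ : ℤ) : ℝ) * ∏ i, S s (σ i) i)
      (((Equiv.Perm.sign σ : ℤ) : ℝ) *
        ∑ i, (∏ j ∈ Finset.univ.erase i, S t (σ j) j) • S₁ (σ i) i) t :=
    (HasDerivAt.fun_finsetProd fun i _ => h (σ i) i).const_mul _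
  simp only [trace, diag_apply, hcol, det_apply']
  refine (HasDerivAt.fun_sum fun σ (_ : σ ∈ Finset.univ) => hprod σ).congr_deriv ?_
  rw [Finset.sum_comm]
  refine Finset.sum_congr rfl fun σ _ => ?_
  rw [Finset.mul_sum]
  refine Finset.sum_congr rfl fun i _ => ?_
  rw [← Finset.mul_prod_erase _ _ (Finset.mem_univ i), updateCol_self, smul_eq_mul,
    mul_comm (S₁ (σ i) i)]
  congr 2
  refine Finset.prod_congr rfl fun j hj => ?_
  rw [updateCol_ne (Finset.ne_of_mem_erase hj)]

lemma hasDerivAt_log_det (h : ∀ i j, HasDerivAt (fun s => S s i j) (S₁ i j) t)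
    (hdet : (S t).det ≠ 0) : HasDerivAt (fun s => log (S s).det) ((S t)⁻¹ * S₁).trace t := by
  refine ((hasDerivAt_det h).log hdet).congr_deriv ?_
  rw [inv_def, Ring.inverse_eq_inv', smul_mul_assoc, trace_smul, smul_eq_mul, div_eq_inv_mul]

attribute [local instance] Matrix.linftyOpNormedRing Matrix.linftyOpNormedAlgebra in
lemma hasDerivAt_inv_apply (h : ∀ i j, HasDerivAt (fun s => S s i j) (S₁ i j) t)
    (hdet : (S t).det ≠ 0) (i j : m) :
    HasDerivAt (fun s => (S s)⁻¹ i j) (-((S t)⁻¹ * S₁ * (S t)⁻¹) i j) t := by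
  have hS : HasDerivAt S S₁ t := hasDerivAt_pi.2 fun i => hasDerivAt_pi.2 (h i)
  obtain ⟨u, hu⟩ := (isUnit_iff_isUnit_det (S t)).2 hdet.isUnit
  have hinv := (hu ▸ hasFDerivAt_ringInverse (𝕜 := ℝ) u).comp_hasDerivAt t hS
  have hentry := hasDerivAt_pi.1 (hasDerivAt_pi.1 hinv i) j
  simpa [Function.comp_def, ← nonsing_inv_eq_ringInverse, ← hu, ← coe_units_inv] using! hentry

lemma hasDerivAt_trace_inv_mul {S₁ : ℝ → Matrix m m ℝ} {S₂ : Matrix m m ℝ}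
    (h : ∀ i j, HasDerivAt (fun s => S s i j) (S₁ t i j) t)
    (h₁ : ∀ i j, HasDerivAt (fun s => S₁ s i j) (S₂ i j) t) (hdet : (S t).det ≠ 0) :
    HasDerivAt (fun s => ((S s)⁻¹ * S₁ s).trace)
      (((S t)⁻¹ * S₂).trace - ((S t)⁻¹ * S₁ t * ((S t)⁻¹ * S₁ t)).trace) t := by
  have hsum := HasDerivAt.fun_sum fun i (_ : i ∈ Finset.univ) =>
    HasDerivAt.fun_sum fun j (_ : j ∈ Finset.univ) =>
      (hasDerivAt_inv_apply h hdet i j).fun_mul (h₁ j i)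
  refine hsum.congr_deriv ?_
  have htrace (A B : Matrix m m ℝ) : (A * B).trace = ∑ i, ∑ j, A i j * B j i := rfl
  rw [← mul_assoc, htrace, htrace]
  simp only [neg_mul, Finset.sum_add_distrib, Finset.sum_neg_distrib]
  ring

end LogDet

section TangentLine

variable {E : Type*} [NormedAddCommGroup E] [InnerProductSpace ℝ E] {x v : E}

lemma add_smul_ne_zero_of_inner_eq_zero (hx : x ≠ 0) (hxv : ⟪x, v⟫_ℝ = 0) (t : ℝ) :
    x + t • v ≠ 0 := by
  intro h
  have hinner : ⟪x, x + t • v⟫_ℝ = ⟪x, x⟫_ℝ := by simp [inner_add_right, inner_smul_right, hxv]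
  rw [h, inner_zero_right, eq_comm, inner_self_eq_zero] at hinner
  exact hx hinner

lemma norm_add_smul_sq_of_inner_eq_zero (hx : ‖x‖ = 1) (hv : ‖v‖ = 1) (hxv : ⟪x, v⟫_ℝ = 0)
    (t : ℝ) : ‖x + t • v‖ ^ 2 = 1 + t ^ 2 := by
  rw [norm_add_sq_real, inner_smul_right, hxv, norm_smul, hx, hv]
  simp

lemma exists_orthonormalBasis_cons {n : ℕ} (hdim : Module.finrank ℝ E = n + 1) (hx : ‖x‖ = 1)
    {e : Fin n → E} (he : Orthonormal ℝ e) (hxe : ∀ i, ⟪x, e i⟫_ℝ = 0) :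
    ∃ b : OrthonormalBasis (Fin (n + 1)) ℝ E, b 0 = x ∧ ∀ i, b i.succ = e i := by
  have hcons : Orthonormal ℝ (Fin.cons x e : Fin (n + 1) → E) := by
    rw [orthonormal_iff_ite] at he ⊢
    intro i j
    refine Fin.cases ?_ (fun i => ?_) i <;> refine Fin.cases ?_ (fun j => ?_) j
    · simp [hx]
    · simp [hxe, (Fin.succ_ne_zero _).symm]
    · simp [real_inner_comm, hxe]
    · simp [he]
  have hspan : ⊤ ≤ Submodule.span ℝ (Set.range (Fin.cons x e : Fin (n + 1) → E)) := by
    rw [hcons.linearIndependent.span_eq_top_of_card_eq_finrank (by simp [hdim])]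
  exact ⟨OrthonormalBasis.mk hcons hspan, by simp, by simp⟩

lemma exists_orthonormalBasis_inner_eq_zero {n : ℕ} (hdim : Module.finrank ℝ E = n + 1)
    (hx : ‖x‖ = 1) {A : E →ₗ[ℝ] E} (hA : A.IsSymmetric) :
    ∃ b : OrthonormalBasis (Fin (n + 1)) ℝ E,
      b 0 = x ∧ ∀ i j : Fin n, i ≠ j → ⟪A (b i.succ), b j.succ⟫_ℝ = 0 := by
  have : Fact (Module.finrank ℝ E = n + 1) := ⟨hdim⟩
  have : FiniteDimensional ℝ E := Module.finite_of_finrank_eq_succ hdim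
  have hx0 : x ≠ 0 := by rintro rfl; simp at hx
  set V : Submodule ℝ E := (Submodule.span ℝ {x})ᗮ
  have hVdim : Module.finrank ℝ V = n := Submodule.finrank_orthogonal_span_singleton hx0
  set T : V →ₗ[ℝ] V := (V.orthogonalProjectionOnto : E →L[ℝ] V).toLinearMap ∘ₗ A ∘ₗ V.subtype
  have hTA (v w : V) : ⟪T v, w⟫_ℝ = ⟪A v, w⟫_ℝ :=
    Submodule.inner_orthogonalProjectionOnto_eq_of_mem_right w (A v)
  have hT : T.IsSymmetric := fun v w => by
    rw [hTA, hA, real_inner_comm, ← hTA, real_inner_comm]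
  set e := hT.eigenvectorBasis hVdim
  obtain ⟨b, hb0, hb⟩ := exists_orthonormalBasis_cons hdim hx (e := fun i => (e i : E))
    (e.orthonormal.comp_linearIsometry V.subtypeₗᵢ)
    fun i => Submodule.mem_orthogonal_singleton_iff_inner_right.1 (e i).2
  refine ⟨b, hb0, fun i j hij => ?_⟩
  rw [hb, hb, ← hTA, hT.apply_eigenvectorBasis, inner_smul_left, e.orthonormal.2 hij, mul_zero]

end TangentLine

section HigherDerivatives

variable {E : Type*} [NormedAddCommGroup E] [NormedSpace ℝ E] {f : E → ℝ} {x : E} {ι : Type*}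

/-- The third derivatives of `f` at `x` in the frame `e`. -/
def frameCubic (f : E → ℝ) (e : ι → E) (x : E) (i j k : ι) : ℝ :=
  ∂[e i] (∂[e j] (∂[e k] f)) x

/-- The fourth derivatives `∂ᵢ∂ᵢ∂ₖ∂ₖ f` at `x` in the frame `e`; no others enter the argument. -/
def frameQuartic (f : E → ℝ) (e : ι → E) (x : E) (i k : ι) : ℝ :=
  ∂[e i] (∂[e i] (∂[e k] (∂[e k] f))) x

lemma SmoothOffZero.dirDeriv_dirDeriv_comm (hf : SmoothOffZero f) (u v w : E) (hx : x ≠ 0) :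
    ∂[u] (∂[v] (∂[w] f)) x = ∂[u] (∂[w] (∂[v] f)) x :=
  dirDeriv_congr_of_ne_zero hx (fun _ hy => hf.dirDeriv_comm v w hy) u

lemma SmoothOffZero.frameCubic_swap_left (hf : SmoothOffZero f) (e : ι → E) (hx : x ≠ 0)
    (i j k : ι) : frameCubic f e x i j k = frameCubic f e x j i k :=
  (hf.dirDeriv _).dirDeriv_comm _ _ hx

lemma SmoothOffZero.frameCubic_swap_right (hf : SmoothOffZero f) (e : ι → E) (hx : x ≠ 0)
    (i j k : ι) : frameCubic f e x i j k = frameCubic f e x i k j :=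
  hf.dirDeriv_dirDeriv_comm _ _ _ hx

lemma SmoothOffZero.frameQuartic_comm (hf : SmoothOffZero f) (e : ι → E) (hx : x ≠ 0) (i k : ι) :
    frameQuartic f e x i k = frameQuartic f e x k i := by
  unfold frameQuartic
  have hinner (y : E) (hy : y ≠ 0) :
      ∂[e i] (∂[e k] (∂[e k] f)) y = ∂[e k] (∂[e k] (∂[e i] f)) y := by
    rw [(hf.dirDeriv _).dirDeriv_comm _ _ hy, hf.dirDeriv_dirDeriv_comm _ _ _ hy]
  rw [dirDeriv_congr_of_ne_zero hx hinner, ((hf.dirDeriv _).dirDeriv _).dirDeriv_comm _ _ hx]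
  exact dirDeriv_congr_of_ne_zero hx (fun y hy => (hf.dirDeriv _).dirDeriv_comm _ _ hy) _

end HigherDerivatives

section PrincipalFrame

variable {n : ℕ} {p : ℝ} {H : Eu n → ℝ} {x : Eu n}
  {b : OrthonormalBasis (Fin (n + 1)) ℝ (Eu n)} {l : Fin n → ℝ}

/-- An orthonormal basis `b` starting with the unit vector `x` whose other vectors diagonalise the
Hessian of `H` on the tangent space of the sphere at `x`, with positive eigenvalues `l`. For a
support function these are the principal directions and radii of curvature. -/
structure PrincipalFrame (H : Eu n → ℝ) (x : Eu n)
    (b : OrthonormalBasis (Fin (n + 1)) ℝ (Eu n)) (l : Fin n → ℝ) : Prop where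
  apply_zero : b 0 = x
  hessianMatrix_eq : hessianMatrix H (b ∘ Fin.succ) x = Matrix.diagonal l
  pos : ∀ i, 0 < l i

lemma PrincipalFrame.norm_eq_one (F : PrincipalFrame H x b l) : ‖x‖ = 1 := by
  rw [← F.apply_zero]
  exact b.orthonormal.1 0

lemma PrincipalFrame.ne_zero (F : PrincipalFrame H x b l) : x ≠ 0 :=
  norm_ne_zero_iff.1 (F.norm_eq_one ▸ one_ne_zero)

lemma PrincipalFrame.inner_eq_zero (F : PrincipalFrame H x b l) (i : Fin n) :
    ⟪x, b i.succ⟫_ℝ = 0 := by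
  rw [← F.apply_zero]
  exact b.orthonormal.2 (Fin.succ_ne_zero i).symm

lemma PrincipalFrame.dirDeriv_dirDeriv_self (F : PrincipalFrame H x b l) (i : Fin n) :
    ∂[b i.succ] (∂[b i.succ] H) x = l i := by
  have hii := congrFun (congrFun F.hessianMatrix_eq i) i
  rwa [Matrix.diagonal_apply_eq] at hii

lemma PrincipalFrame.dirDeriv_dirDeriv_of_ne (F : PrincipalFrame H x b l) {i j : Fin n}
    (hij : i ≠ j) : ∂[b i.succ] (∂[b j.succ] H) x = 0 := by
  have hdiag := congrFun (congrFun F.hessianMatrix_eq i) j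
  rwa [Matrix.diagonal_apply_ne _ hij] at hdiag

lemma IsMongeAmpereSolution.exists_principalFrame (hH : IsMongeAmpereSolution p H)
    (hx : ‖x‖ = 1) : ∃ b l, PrincipalFrame H x b l := by
  have hx0 : x ≠ 0 := norm_ne_zero_iff.1 (hx ▸ one_ne_zero)
  have hinner (v w : Eu n) := hH.smooth.inner_fderiv_gradient hx0 v w
  have hsymm : (fderiv ℝ (gradient H) x).toLinearMap.IsSymmetric := fun v w => by
    simp only [ContinuousLinearMap.coe_coe]
    rw [hinner, real_inner_comm, hinner, hH.smooth.dirDeriv_comm _ _ hx0]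
  obtain ⟨b, hb0, hb⟩ := exists_orthonormalBasis_inner_eq_zero (n := n) (by simp) hx hsymm
  refine ⟨b, fun i => ∂[b i.succ] (∂[b i.succ] H) x, hb0, ?_, fun i => ?_⟩
  · ext i j
    rcases eq_or_ne i j with rfl | hij
    · simp [hessianMatrix_apply]
    · rw [Matrix.diagonal_apply_ne _ hij, ← hb i j hij]
      exact (hinner _ _).symm
  · refine hH.posDef hx ?_ (b.orthonormal.ne_zero _)
    rw [← hb0]
    exact b.orthonormal.2 (Fin.succ_ne_zero i).symm

lemma IsMongeAmpereSolution.log_det_hessianMatrix_line (hH : IsMongeAmpereSolution p H)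
    (F : PrincipalFrame H x b l) (k : Fin n) (t : ℝ) :
    0 < (hessianMatrix H (b ∘ Fin.succ) (x + t • b k.succ)).det ∧
    log (hessianMatrix H (b ∘ Fin.succ) (x + t • b k.succ)).det
      = (p - 1) * log (H (x + t • b k.succ)) - ((n : ℝ) + 1 + p) / 2 * log (1 + t ^ 2) := by
  have hne := add_smul_ne_zero_of_inner_eq_zero F.ne_zero (F.inner_eq_zero k) t
  have hinner : ⟪b 0, x + t • b k.succ⟫_ℝ = 1 := by
    rw [F.apply_zero, inner_add_right, inner_smul_right, F.inner_eq_zero]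
    simp [F.norm_eq_one]
  have hHpos := hH.pos hne
  have hnorm := norm_pos_iff.2 hne
  rw [hH.det_eq_of_inner_eq_one b hinner,
    ← norm_add_smul_sq_of_inner_eq_zero F.norm_eq_one (b.orthonormal.1 k.succ)
      (F.inner_eq_zero k) t]
  refine ⟨by positivity, ?_⟩
  rw [log_mul (by positivity) (by positivity), log_rpow hHpos, log_rpow hnorm, log_pow]
  push_cast
  ring

lemma IsMongeAmpereSolution.hasDerivAt_log_det_line (hH : IsMongeAmpereSolution p H)
    (F : PrincipalFrame H x b l) (k : Fin n) (t : ℝ) :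
    HasDerivAt (fun s => log (hessianMatrix H (b ∘ Fin.succ) (x + s • b k.succ)).det)
      ((p - 1) * (∂[b k.succ] H (x + t • b k.succ) / H (x + t • b k.succ))
        - ((n : ℝ) + 1 + p) * (t / (1 + t ^ 2))) t := by
  have hne := add_smul_ne_zero_of_inner_eq_zero F.ne_zero (F.inner_eq_zero k) t
  have hH' := ((hH.smooth.hasDerivAt_line hne).log (hH.pos hne).ne').const_mul (p - 1)
  have hsq : HasDerivAt (fun s : ℝ => 1 + s ^ 2) (2 * t) t := by
    simpa using ((hasDerivAt_id t).pow 2).const_add 1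
  have hlog := (hsq.log (by positivity)).const_mul (((n : ℝ) + 1 + p) / 2)
  simp only [hH.log_det_hessianMatrix_line F k]
  exact (hH'.sub hlog).congr_deriv (by ring)

lemma IsMongeAmpereSolution.hasDerivAt_hessianMatrix_line (hH : IsMongeAmpereSolution p H)
    (F : PrincipalFrame H x b l) (k : Fin n) (t : ℝ) (i j : Fin n) :
    HasDerivAt (fun s => hessianMatrix H (b ∘ Fin.succ) (x + s • b k.succ) i j)
      (frameCubic H (b ∘ Fin.succ) (x + t • b k.succ) k i j) t :=
  ((hH.smooth.dirDeriv _).dirDeriv _).hasDerivAt_line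
    (add_smul_ne_zero_of_inner_eq_zero F.ne_zero (F.inner_eq_zero k) t)

lemma IsMongeAmpereSolution.trace_inv_mul_frameCubic_line (hH : IsMongeAmpereSolution p H)
    (F : PrincipalFrame H x b l) (k : Fin n) (t : ℝ) :
    ((hessianMatrix H (b ∘ Fin.succ) (x + t • b k.succ))⁻¹
        * Matrix.of (frameCubic H (b ∘ Fin.succ) (x + t • b k.succ) k)).trace
      = (p - 1) * (∂[b k.succ] H (x + t • b k.succ) / H (x + t • b k.succ))
        - ((n : ℝ) + 1 + p) * (t / (1 + t ^ 2)) :=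
  (hasDerivAt_log_det (hH.hasDerivAt_hessianMatrix_line F k t)
    (hH.log_det_hessianMatrix_line F k t).1.ne').unique (hH.hasDerivAt_log_det_line F k t)

lemma PrincipalFrame.hessianMatrix_inv (F : PrincipalFrame H x b l) :
    (hessianMatrix H (b ∘ Fin.succ) x)⁻¹ = Matrix.diagonal fun i => (l i)⁻¹ := by
  rw [F.hessianMatrix_eq]
  refine Matrix.inv_eq_right_inv ?_
  rw [Matrix.diagonal_mul_diagonal, ← Matrix.diagonal_one]
  congr 1
  ext i
  exact mul_inv_cancel₀ (F.pos i).ne'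

lemma PrincipalFrame.sum_frameCubic_div (F : PrincipalFrame H x b l)
    (hH : IsMongeAmpereSolution p H) (k : Fin n) :
    ∑ i, frameCubic H (b ∘ Fin.succ) x i i k / l i = (p - 1) * (∂[b k.succ] H x / H x) := by
  have htrace := hH.trace_inv_mul_frameCubic_line F k 0
  simp only [zero_smul, add_zero, zero_div, mul_zero, sub_zero] at htrace
  rw [← htrace, F.hessianMatrix_inv, Matrix.trace]
  refine Finset.sum_congr rfl fun i _ => ?_
  rw [Matrix.diag_apply, Matrix.diagonal_mul, Matrix.of_apply, hH.smooth.frameCubic_swap_right _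
    F.ne_zero, hH.smooth.frameCubic_swap_left _ F.ne_zero, div_eq_inv_mul]

lemma IsMongeAmpereSolution.hasDerivAt_deriv_log_det_line (hH : IsMongeAmpereSolution p H)
    (F : PrincipalFrame H x b l) (k : Fin n) :
    HasDerivAt (fun t : ℝ => (p - 1) * (∂[b k.succ] H (x + t • b k.succ) / H (x + t • b k.succ))
        - ((n : ℝ) + 1 + p) * (t / (1 + t ^ 2)))
      ((p - 1) * (l k / H x - (∂[b k.succ] H x / H x) ^ 2) - ((n : ℝ) + 1 + p)) 0 := by
  have hne := add_smul_ne_zero_of_inner_eq_zero F.ne_zero (F.inner_eq_zero k) 0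
  have hquot := ((hH.smooth.dirDeriv (b k.succ)).hasDerivAt_line hne).div
    (hH.smooth.hasDerivAt_line hne) (hH.pos hne).ne'
  have hsq : HasDerivAt (fun t : ℝ => 1 + t ^ 2) 0 0 := by
    simpa using ((hasDerivAt_id (0 : ℝ)).pow 2).const_add 1
  have hrational := (hasDerivAt_id (0 : ℝ)).div hsq (by norm_num)
  refine ((hquot.const_mul (p - 1)).sub (hrational.const_mul _)).congr_deriv ?_
  have hHpos := hH.pos F.ne_zero
  simp only [zero_smul, add_zero, F.dirDeriv_dirDeriv_self]
  field_simp
  norm_num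

lemma PrincipalFrame.sum_frameQuartic_div (F : PrincipalFrame H x b l)
    (hH : IsMongeAmpereSolution p H) (k : Fin n) :
    ∑ i, frameQuartic H (b ∘ Fin.succ) x i k / l i
      = ∑ i, ∑ j, frameCubic H (b ∘ Fin.succ) x i j k ^ 2 / (l i * l j)
        + (p - 1) * (l k / H x - (∂[b k.succ] H x / H x) ^ 2) - ((n : ℝ) + 1 + p) := by
  have hne := add_smul_ne_zero_of_inner_eq_zero F.ne_zero (F.inner_eq_zero k) 0
  have hx : x + (0 : ℝ) • b k.succ = x := by simp
  have htrace := hasDerivAt_trace_inv_mul (hH.hasDerivAt_hessianMatrix_line F k 0)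
    (S₁ := fun t => Matrix.of (frameCubic H (b ∘ Fin.succ) (x + t • b k.succ) k))
    (fun i j => (((hH.smooth.dirDeriv _).dirDeriv _).dirDeriv _).hasDerivAt_line hne)
    (hH.log_det_hessianMatrix_line F k 0).1.ne'
  simp only [hH.trace_inv_mul_frameCubic_line F k, hx, F.hessianMatrix_inv] at htrace
  have hderiv := htrace.unique (hH.hasDerivAt_deriv_log_det_line F k)
  have hquartic : ∑ i, frameQuartic H (b ∘ Fin.succ) x i k / l i
      = (Matrix.diagonal (fun i => (l i)⁻¹) * Matrix.of fun i j : Fin n =>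
          ∂[b k.succ] (∂[b k.succ] (∂[b i.succ] (∂[b j.succ] H))) x).trace := by
    refine Finset.sum_congr rfl fun i _ => ?_
    rw [hH.smooth.frameQuartic_comm _ F.ne_zero, Matrix.diag_apply, Matrix.diagonal_mul,
      div_eq_inv_mul]
    rfl
  have hcubic : ∑ i, ∑ j, frameCubic H (b ∘ Fin.succ) x i j k ^ 2 / (l i * l j)
      = (Matrix.diagonal (fun i => (l i)⁻¹) * Matrix.of (frameCubic H (b ∘ Fin.succ) x k)
        * (Matrix.diagonal (fun i => (l i)⁻¹)
          * Matrix.of (frameCubic H (b ∘ Fin.succ) x k))).trace := by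
    refine Finset.sum_congr rfl fun i _ => ?_
    rw [Matrix.diag_apply, Matrix.mul_apply]
    refine Finset.sum_congr rfl fun j _ => ?_
    simp only [Matrix.diagonal_mul, Matrix.of_apply]
    rw [hH.smooth.frameCubic_swap_right _ F.ne_zero k j i,
      hH.smooth.frameCubic_swap_left _ F.ne_zero k i j,
      hH.smooth.frameCubic_swap_right _ F.ne_zero i k j]
    ring
  rw [hquartic, hcubic, add_sub_assoc]
  exact sub_eq_iff_eq_add'.1 hderiv

end PrincipalFrame

section FiniteSums

variable {ι : Type*} [Fintype ι]

lemma sq_sum_add_le_card_mul (f : ι → ℝ) (j : ι) (a : ℝ) :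
    (∑ i, f i + a) ^ 2 ≤ Fintype.card ι * (∑ i, f i ^ 2 + 2 * a * f j + a ^ 2) := by
  classical
  have hcauchy := sq_sum_le_card_mul_sum_sq (s := Finset.univ)
    (f := fun i => f i + if i = j then a else 0)
  have hsq (i : ι) : (f i + if i = j then a else 0) ^ 2
      = f i ^ 2 + if i = j then 2 * a * f j + a ^ 2 else 0 := by
    split_ifs with hij
    · subst hij
      ring
    · ring
  simpa [hsq, Finset.sum_add_distrib, add_assoc] using hcauchy

lemma sum_diag_add_sum_cross_le [DecidableEq ι] {M : ι → ι → ℝ} (hM : ∀ i j, 0 ≤ M i j) (k : ι) :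
    ∑ i, M i i + ∑ i, (if i = k then 0 else M i k + M k i) ≤ ∑ i, ∑ j, M i j := by
  have hentry (i j : ι) : (if i = j then M i j else 0)
      + (if j = k then (if i = j then 0 else M i j) else 0)
      + (if i = k then (if i = j then 0 else M i j) else 0) ≤ M i j := by
    have := hM i j
    by_cases hij : i = j <;> by_cases hjk : j = k <;> by_cases hik : i = k <;> simp_all
  refine le_trans (le_of_eq ?_)
    (Finset.sum_le_sum fun i _ => Finset.sum_le_sum (g := M i) fun j _ => hentry i j)
  have hrow : ∑ i, ∑ j, (if i = k then (if i = j then 0 else M i j) else 0)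
      = ∑ i, if i = k then 0 else M k i := by
    rw [Finset.sum_comm]
    simp [eq_comm]
  have hsplit (i : ι) : (if i = k then 0 else M i k + M k i)
      = (if i = k then 0 else M i k) + if i = k then 0 else M k i := by
    split_ifs <;> simp
  simp only [hsplit, Finset.sum_add_distrib, hrow, Finset.sum_ite_eq, Finset.sum_ite_eq',
    Finset.mem_univ, if_true, add_assoc]

lemma sum_mul_sub_const_sq (l ζ : ι → ℝ) (c : ℝ) :
    ∑ i, l i * (ζ i - c) ^ 2
      = ∑ i, l i * ζ i ^ 2 - 2 * c * ∑ i, l i * ζ i + c ^ 2 * ∑ i, l i := by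
  simp only [Finset.mul_sum, ← Finset.sum_add_distrib, ← Finset.sum_sub_distrib]
  exact Finset.sum_congr rfl fun i _ => by ring

end FiniteSums

section Jet

/-- Values at a point of the derivatives up to order four, in a principal frame, of a solution of
the Monge–Ampère equation `det = H ^ (p - 1)`: the value `h`, the gradient `g`, the principal radii
`l`, the third derivatives `C` and the fourth derivatives `Q i k = ∂ᵢ∂ᵢ∂ₖ∂ₖ H`. The last two fields
are the first and second derivatives of the logarithm of the equation. -/
structure MongeAmpereJet (n : ℕ) (p : ℝ) where
  h : ℝ
  g : Fin n → ℝ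
  l : Fin n → ℝ
  C : Fin n → Fin n → Fin n → ℝ
  Q : Fin n → Fin n → ℝ
  h_pos : 0 < h
  l_pos : ∀ i, 0 < l i
  C_swap_left : ∀ i j k, C i j k = C j i k
  C_swap_right : ∀ i j k, C i j k = C i k j
  Q_comm : ∀ i k, Q i k = Q k i
  sum_C_div : ∀ k, ∑ i, C i i k / l i = (p - 1) * (g k / h)
  sum_Q_div : ∀ k, ∑ i, Q i k / l i = ∑ i, ∑ j, C i j k ^ 2 / (l i * l j)
    + (p - 1) * (l k / h - (g k / h) ^ 2) - (n + 1 + p)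

variable {n : ℕ} {p : ℝ}

/-- The jet of a solution in a principal frame. -/
def PrincipalFrame.jet {H : Eu n → ℝ} {x : Eu n} {b : OrthonormalBasis (Fin (n + 1)) ℝ (Eu n)}
    {l : Fin n → ℝ} (F : PrincipalFrame H x b l)
    (hH : IsMongeAmpereSolution p H) : MongeAmpereJet n p where
  h := H x
  g i := ∂[b i.succ] H x
  l := l
  C := frameCubic H (b ∘ Fin.succ) x
  Q := frameQuartic H (b ∘ Fin.succ) x
  h_pos := hH.pos F.ne_zero
  l_pos := F.pos
  C_swap_left := hH.smooth.frameCubic_swap_left _ F.ne_zero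
  C_swap_right := hH.smooth.frameCubic_swap_right _ F.ne_zero
  Q_comm := hH.smooth.frameQuartic_comm _ F.ne_zero
  sum_C_div := F.sum_frameCubic_div hH
  sum_Q_div := F.sum_frameQuartic_div hH

namespace MongeAmpereJet

variable (J : MongeAmpereJet n p)

lemma C_rotate (i k : Fin n) : J.C k i i = J.C i i k := by
  rw [J.C_swap_left, J.C_swap_right]

lemma sum_gradient_C_div :
    ∑ i, (∑ j, J.g j * J.C j i i) / J.l i = (p - 1) / J.h * ∑ j, J.g j ^ 2 := by
  simp only [Finset.sum_div]
  rw [Finset.sum_comm, Finset.mul_sum]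
  refine Finset.sum_congr rfl fun j _ => ?_
  calc ∑ i, J.g j * J.C j i i / J.l i = J.g j * ∑ i, J.C i i j / J.l i := by
        rw [Finset.mul_sum]
        exact Finset.sum_congr rfl fun i _ => by rw [J.C_rotate]; ring
    _ = (p - 1) / J.h * J.g j ^ 2 := by rw [J.sum_C_div]; ring

lemma sum_div_add_le_of_second_order {γ : ℝ} {A e : Fin n → ℝ}
    (hA : ∀ i, A i - γ * (J.l i ^ 2 + ∑ j, J.g j * J.C j i i - J.h * J.l i) + e i ≤ 0) :
    ∑ i, A i / J.l i - γ * (∑ i, J.l i + (p - 1) / J.h * ∑ j, J.g j ^ 2 - n * J.h)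
      + ∑ i, e i / J.l i ≤ 0 := by
  refine le_of_eq_of_le ?_ (Finset.sum_nonpos (s := Finset.univ) fun i _ =>
    div_nonpos_of_nonpos_of_nonneg (hA i) (J.l_pos i).le)
  have hdiv (i : Fin n) :
      (A i - γ * (J.l i ^ 2 + ∑ j, J.g j * J.C j i i - J.h * J.l i) + e i) / J.l i
      = A i / J.l i - γ * (J.l i + (∑ j, J.g j * J.C j i i) / J.l i - J.h) + e i / J.l i := by
    have := (J.l_pos i).ne'
    field_simp
  simp only [hdiv, Finset.sum_add_distrib, Finset.sum_sub_distrib, ← Finset.mul_sum,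
    J.sum_gradient_C_div, Finset.sum_const, Finset.card_univ, Fintype.card_fin, nsmul_eq_mul]

lemma sum_sum_Q_div : ∑ i, (∑ k, J.Q k i) / J.l i
    = ∑ k, ∑ i, ∑ j, J.C i j k ^ 2 / (J.l i * J.l j)
      + (p - 1) * ((∑ i, J.l i) / J.h - (∑ i, J.g i ^ 2) / J.h ^ 2) - n * (n + 1 + p) := by
  calc ∑ i, (∑ k, J.Q k i) / J.l i = ∑ k, ∑ i, J.Q i k / J.l i := by
        simp only [Finset.sum_div]
        rw [Finset.sum_comm]
        exact Finset.sum_congr rfl fun k _ => Finset.sum_congr rfl fun i _ => by rw [J.Q_comm]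
    _ = _ := by
        simp only [J.sum_Q_div, div_pow, Finset.sum_add_distrib, Finset.sum_sub_distrib,
          ← Finset.mul_sum, ← Finset.sum_div, Finset.sum_const, Finset.card_univ,
          Fintype.card_fin, nsmul_eq_mul]
        ring

lemma sum_sum_C_sq_le :
    ∑ k, ∑ i, J.C i i k ^ 2 * (1 / J.l i ^ 2 + if i = k then 0 else 2 / (J.l i * J.l k))
      ≤ ∑ k, ∑ i, ∑ j, J.C i j k ^ 2 / (J.l i * J.l j) := by
  have hcross (k : Fin n) := sum_diag_add_sum_cross_le
    (M := fun i j => J.C i j k ^ 2 / (J.l i * J.l j))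
    (fun i j => div_nonneg (sq_nonneg _) (mul_pos (J.l_pos i) (J.l_pos j)).le) k
  refine le_of_eq_of_le ?_ (Finset.sum_le_sum (s := Finset.univ) fun k _ => hcross k)
  have hswap : ∑ k, ∑ i, (if i = k then 0
        else J.C i k k ^ 2 / (J.l i * J.l k) + J.C k i k ^ 2 / (J.l k * J.l i))
      = ∑ k, ∑ i, if i = k then 0 else 2 * J.C i i k ^ 2 / (J.l i * J.l k) := by
    rw [Finset.sum_comm]
    refine Finset.sum_congr rfl fun k _ => Finset.sum_congr rfl fun i _ => ?_
    rw [J.C_rotate, J.C_swap_right i k i]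
    simp only [eq_comm (a := k)]
    split_ifs
    · rfl
    · ring
  rw [Finset.sum_add_distrib, hswap, ← Finset.sum_add_distrib]
  refine Finset.sum_congr rfl fun k _ => ?_
  rw [← Finset.sum_add_distrib]
  refine Finset.sum_congr rfl fun i _ => ?_
  split_ifs <;> ring

lemma sum_C_sq_le (m : Fin n) :
    ∑ i, (if i = m then J.C m m i ^ 2 / J.l m ^ 2 else 2 * J.C m m i ^ 2 / (J.l i * J.l m))
      ≤ ∑ i, ∑ j, J.C i j m ^ 2 / (J.l i * J.l j) := by
  have hnonneg (i j : Fin n) : 0 ≤ J.C i j m ^ 2 / (J.l i * J.l j) :=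
    div_nonneg (sq_nonneg _) (mul_pos (J.l_pos i) (J.l_pos j)).le
  have hdiag := Finset.single_le_sum (f := fun i => J.C i i m ^ 2 / (J.l i * J.l i))
    (fun i _ => hnonneg i i) (Finset.mem_univ m)
  refine le_trans (le_of_eq ?_)
    ((add_le_add_left hdiag _).trans (sum_diag_add_sum_cross_le hnonneg m))
  have hsingle : J.C m m m ^ 2 / (J.l m * J.l m)
      = ∑ i, if i = m then J.C i i m ^ 2 / (J.l i * J.l i) else 0 := by simp
  rw [hsingle, ← Finset.sum_add_distrib]
  refine Finset.sum_congr rfl fun i _ => ?_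
  rw [J.C_rotate, J.C_swap_right m i m]
  split_ifs with him
  · subst him
    ring
  · ring

section LaplacianTest

lemma laplacianTest_summed {e : Fin n → ℝ} (hA : ∀ i,
      J.l i * ∑ k, J.l k + 2 * J.g i * ∑ k, J.C k k i + J.h * (∑ k, J.Q k i + 2 * J.l i)
      - (n - 1 + p) * (J.l i ^ 2 + ∑ j, J.g j * J.C j i i - J.h * J.l i) + e i ≤ 0) :
    J.h ^ 2 * ∑ k, ∑ i, ∑ j, J.C i j k ^ 2 / (J.l i * J.l j)
      + ∑ i, 2 * J.h * J.g i * (∑ k, J.C k k i) / J.l i + (1 - p) * (n + p) * ∑ i, J.g i ^ 2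
      + ∑ i, J.h * e i / J.l i ≤ 0 := by
  have hdiv (i : Fin n) : (J.l i * ∑ k, J.l k + 2 * J.g i * ∑ k, J.C k k i
        + J.h * (∑ k, J.Q k i + 2 * J.l i)) / J.l i
      = ∑ k, J.l k + 2 * J.g i * (∑ k, J.C k k i) / J.l i + J.h * ((∑ k, J.Q k i) / J.l i)
        + 2 * J.h := by
    have := (J.l_pos i).ne'
    field_simp
    ring
  have hsum := J.sum_div_add_le_of_second_order hA
  simp only [hdiv, Finset.sum_add_distrib, ← Finset.mul_sum, Finset.sum_const, Finset.card_univ,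
    Fintype.card_fin, nsmul_eq_mul, J.sum_sum_Q_div] at hsum
  have hpos := J.h_pos
  have hscale (f : Fin n → ℝ) : ∑ i, 2 * J.h * J.g i * f i / J.l i
      = J.h * ∑ i, 2 * J.g i * f i / J.l i := by
    rw [Finset.mul_sum]
    exact Finset.sum_congr rfl fun i _ => by ring
  simp only [hscale, mul_div_assoc J.h, ← Finset.mul_sum]
  refine le_of_eq_of_le ?_ (mul_nonpos_of_nonneg_of_nonpos hpos.le hsum)
  field_simp
  ring

lemma laplacianTest_quadratic_le (hn : 0 < n) {q g z : ℝ} {l ζ : Fin n → ℝ}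
    (hl : ∀ i, 0 < l i) (j : Fin n) (hsum : ∑ i, ζ i = (n - q) * g)
    (hweighted : ∑ i, l i * ζ i = (n - q) * l j * g + z) :
    (n + 2 - q) * (n - 1) * (q - 2) / n * g ^ 2 - 2 * g * z / l j
      ≤ ∑ i, (ζ i - g) ^ 2 + 2 / l j * ∑ i, l i * (ζ i - g) ^ 2 - 2 * (ζ j - g) ^ 2
        + 2 * g / l j * ∑ i, l i * (ζ i - g) + q * (n + 1 - q) * g ^ 2 := by
  have hn' : (0 : ℝ) < n := by exact_mod_cast hn
  have hlj := hl j
  have hcauchy : ((n + 2 - q) * g) ^ 2 / n ≤ ∑ i, ζ i ^ 2 + 4 * g * ζ j + 4 * g ^ 2 := by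
    have := sq_sum_add_le_card_mul ζ j (2 * g)
    rw [div_le_iff₀ hn']
    rw [hsum, Fintype.card_fin] at this
    linarith
  have hsingle : 2 * ζ j ^ 2 ≤ 2 / l j * ∑ i, l i * ζ i ^ 2 := by
    have := Finset.single_le_sum (f := fun i => l i * ζ i ^ 2)
      (fun i _ => mul_nonneg (hl i).le (sq_nonneg _)) (Finset.mem_univ j)
    rw [div_mul_eq_mul_div, le_div_iff₀ hlj]
    linarith
  have hexpand : ∑ i, (ζ i - g) ^ 2 + 2 / l j * ∑ i, l i * (ζ i - g) ^ 2 - 2 * (ζ j - g) ^ 2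
        + 2 * g / l j * ∑ i, l i * (ζ i - g)
      = ∑ i, ζ i ^ 2 + 2 / l j * ∑ i, l i * ζ i ^ 2 - 2 * ζ j ^ 2 + 4 * g * ζ j
        - 2 * g * z / l j + (n - 2 - 4 * (n - q)) * g ^ 2 := by
    have hsquares := sum_mul_sub_const_sq 1 ζ g
    simp only [Pi.one_apply, one_mul, Finset.sum_const, Finset.card_univ, Fintype.card_fin,
      nsmul_eq_mul, mul_one] at hsquares
    simp only [mul_sub, Finset.sum_sub_distrib, ← Finset.sum_mul]
    rw [hsquares, sum_mul_sub_const_sq, hsum, hweighted]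
    field_simp
    ring
  have hconst : (n + 2 - q) * (n - 1) * (q - 2) / n * g ^ 2 = ((n + 2 - q) * g) ^ 2 / n
      + (-4 - 2 - 4 * (n - q) + n + q * (n + 1 - q)) * g ^ 2 := by
    field_simp
    ring
  linarith

/-- The rescaled `j`-th column of third derivatives that diagonalises the quadratic form of the
Laplacian test. -/
def column (j i : Fin n) : ℝ := J.h * J.C i i j / J.l i + J.g j

lemma sum_column (j : Fin n) : ∑ i, J.column j i = (n - (1 - p)) * J.g j := by
  have hh := J.h_pos
  simp only [column, Finset.sum_add_distrib, mul_div_assoc, ← Finset.mul_sum, J.sum_C_div,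
    Finset.sum_const, Finset.card_univ, Fintype.card_fin, nsmul_eq_mul]
  field_simp
  ring

lemma l_mul_column_sub (j i : Fin n) :
    J.l i * (J.column j i - J.g j) = J.h * J.C i i j := by
  have := (J.l_pos i).ne'
  simp only [column]
  field_simp
  ring

lemma sum_l_mul_column_sub (j : Fin n) :
    ∑ i, J.l i * (J.column j i - J.g j) = J.h * ∑ i, J.C i i j := by
  simp only [J.l_mul_column_sub, Finset.mul_sum]

lemma sum_column_sub_sq (j : Fin n) :
    ∑ i, (J.column j i - J.g j) ^ 2 + 2 / J.l j * ∑ i, J.l i * (J.column j i - J.g j) ^ 2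
        - 2 * (J.column j j - J.g j) ^ 2
      = J.h ^ 2 * ∑ i,
          J.C i i j ^ 2 * (1 / J.l i ^ 2 + if i = j then 0 else 2 / (J.l i * J.l j)) := by
  have hdiag : 2 * (J.column j j - J.g j) ^ 2
      = ∑ i, if i = j then 2 / J.l j * (J.l i * (J.column j i - J.g j) ^ 2) else 0 := by
    have := (J.l_pos j).ne'
    rw [Finset.sum_ite_eq' Finset.univ j, if_pos (Finset.mem_univ j)]
    field_simp
  rw [hdiag]
  simp only [Finset.mul_sum, ← Finset.sum_add_distrib, ← Finset.sum_sub_distrib]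
  refine Finset.sum_congr rfl fun i _ => ?_
  have hi := (J.l_pos i).ne'
  have hj := (J.l_pos j).ne'
  rw [show J.column j i - J.g j = J.h * J.C i i j / J.l i by
    rw [← J.l_mul_column_sub, mul_div_cancel_left₀ _ hi]]
  split_ifs with hij
  · subst hij
    field_simp
    ring
  · field_simp
    ring

lemma laplacianTest_column_le (hn : 0 < n) (j : Fin n) {f : ℝ}
    (hfirst : J.g j * ∑ k, J.l k + J.h * ∑ k, J.C k k j - (n - 1 + p) * J.l j * J.g j + f = 0) :
    (n + 1 + p) * (n - 1) * (-1 - p) / n * J.g j ^ 2 + 2 * J.g j * f / J.l j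
      ≤ J.h ^ 2 * ∑ i, J.C i i j ^ 2 * (1 / J.l i ^ 2 + if i = j then 0 else 2 / (J.l i * J.l j))
        + 2 * J.h * J.g j * (∑ k, J.C k k j) / J.l j + (1 - p) * (n + p) * J.g j ^ 2 := by
  have hweighted : ∑ i, J.l i * J.column j i = (n - (1 - p)) * J.l j * J.g j - f := by
    have hsub := J.sum_l_mul_column_sub j
    simp only [mul_sub, Finset.sum_sub_distrib, ← Finset.sum_mul] at hsub
    linarith
  have hbound := laplacianTest_quadratic_le hn J.l_pos j (J.sum_column j) (z := -f)
    (by linarith)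
  have hcross : 2 * J.h * J.g j * (∑ k, J.C k k j) / J.l j
      = 2 * J.g j / J.l j * ∑ i, J.l i * (J.column j i - J.g j) := by
    rw [J.sum_l_mul_column_sub]
    ring
  rw [← J.sum_column_sub_sq, hcross]
  refine le_of_eq_of_le ?_ (hbound.trans_eq ?_) <;> ring

theorem laplacianTest_nonpos (hn : 0 < n) {f e : Fin n → ℝ}
    (hfirst : ∀ i, J.g i * ∑ k, J.l k + J.h * ∑ k, J.C k k i
      - (n - 1 + p) * J.l i * J.g i + f i = 0)
    (hsecond : ∀ i, J.l i * ∑ k, J.l k + 2 * J.g i * ∑ k, J.C k k i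
      + J.h * (∑ k, J.Q k i + 2 * J.l i)
      - (n - 1 + p) * (J.l i ^ 2 + ∑ j, J.g j * J.C j i i - J.h * J.l i) + e i ≤ 0) :
    (n + 1 + p) * (n - 1) * (-1 - p) / n * ∑ i, J.g i ^ 2
      + ∑ i, (J.h * e i + 2 * (J.g i * f i)) / J.l i ≤ 0 := by
  have hcolumns := Finset.sum_le_sum fun j (_ : j ∈ Finset.univ) =>
    J.laplacianTest_column_le hn j (hfirst j)
  have hcubic := mul_le_mul_of_nonneg_left J.sum_sum_C_sq_le (sq_nonneg J.h)
  have hsummed := J.laplacianTest_summed hsecond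
  simp only [Finset.sum_add_distrib, ← Finset.mul_sum] at hcolumns
  simp only [add_div, Finset.sum_add_distrib, ← mul_assoc (2 : ℝ)]
  linarith

end LaplacianTest

section HessianTest

/-- The second-order contribution at the largest principal radius `l m` of rotating the direction
`e m` together with the base point. -/
def rotationTerm (m : Fin n) : ℝ :=
  2 * J.h * J.l m - ∑ j, if j = m then 0
    else 4 * J.g j * J.C m m j + 2 * (J.l m - J.l j) * J.g j ^ 2 / J.h

lemma hessianTest_summed {m : Fin n} (hm : ∀ i, J.l i ≤ J.l m) {γ : ℝ} (hγ : 0 ≤ γ)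
    (hγn : γ * n = n - 1 + p) {e : Fin n → ℝ} (hA : ∀ i,
      J.l i * J.l m + 2 * J.g i * J.C m m i + J.h * J.Q i m
        + (if i = m then J.rotationTerm m else 0)
      - γ * (J.l i ^ 2 + ∑ j, J.g j * J.C j i i - J.h * J.l i) + e i ≤ 0) :
    J.h ^ 2 * ∑ i, ∑ j, J.C i j m ^ 2 / (J.l i * J.l j)
      + J.h * ∑ i, 2 * J.g i * J.C m m i / J.l i + (1 - p) * J.g m ^ 2
      + γ * (1 - p) * ∑ i, J.g i ^ 2 + J.h * (J.rotationTerm m / J.l m) - 2 * J.h ^ 2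
      + J.h * ∑ i, e i / J.l i ≤ 0 := by
  have hdiv (i : Fin n) : (J.l i * J.l m + 2 * J.g i * J.C m m i + J.h * J.Q i m
        + (if i = m then J.rotationTerm m else 0)) / J.l i
      = J.l m + 2 * J.g i * J.C m m i / J.l i + J.h * (J.Q i m / J.l i)
        + (if i = m then J.rotationTerm m / J.l m else 0) := by
    have := (J.l_pos i).ne'
    split_ifs with him
    · subst him
      field_simp
    · field_simp
      ring
  have hsum := J.sum_div_add_le_of_second_order hA
  simp only [hdiv, Finset.sum_add_distrib, ← Finset.mul_sum, Finset.sum_const, Finset.card_univ,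
    Fintype.card_fin, nsmul_eq_mul, Finset.sum_ite_eq', Finset.mem_univ, if_true,
    J.sum_Q_div] at hsum
  have htrace : γ * ∑ i, J.l i ≤ γ * n * J.l m := by
    have := Finset.sum_le_sum fun i (_ : i ∈ Finset.univ) => hm i
    simp only [Finset.sum_const, Finset.card_univ, Fintype.card_fin, nsmul_eq_mul] at this
    nlinarith
  have hpos := J.h_pos
  have hscaled := mul_nonpos_of_nonneg_of_nonpos hpos.le hsum
  have hexcess := mul_nonneg hpos.le (sub_nonneg.2 htrace)
  rw [hγn] at hexcess
  have hγn' : γ * (n * J.h) = (n - 1 + p) * J.h := by rw [← hγn]; ring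
  refine le_trans (le_add_of_nonneg_right hexcess) (le_of_eq_of_le ?_ hscaled)
  field_simp
  linear_combination (-J.h) * hγn'

lemma hessianTest_max_le {κ γ : ℝ} (hκ : κ ≤ (1 + γ) * (γ - p)) {m : Fin n} {f : ℝ}
    (hfirst : J.g m * J.l m + J.h * J.C m m m - γ * J.l m * J.g m + f = 0) :
    κ * J.g m ^ 2 - 2 * γ * (J.g m * f) / J.l m
      ≤ J.h * (2 * J.g m * J.C m m m / J.l m) + J.h ^ 2 * (J.C m m m ^ 2 / J.l m ^ 2)
        + γ * (1 - p) * J.g m ^ 2 + (1 - p) * J.g m ^ 2 := by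
  have hh := J.h_pos
  have hl := J.l_pos m
  have hC : J.C m m m = (γ * J.l m * J.g m - J.g m * J.l m - f) / J.h := by
    rw [eq_div_iff hh.ne']
    linarith
  have hsquare : J.h * (2 * J.g m * J.C m m m / J.l m) + J.h ^ 2 * (J.C m m m ^ 2 / J.l m ^ 2)
        + γ * (1 - p) * J.g m ^ 2 + (1 - p) * J.g m ^ 2
      = (f / J.l m) ^ 2 - 2 * γ * (J.g m * f) / J.l m + (1 + γ) * (γ - p) * J.g m ^ 2 := by
    rw [hC]
    field_simp
    ring
  rw [hsquare]
  linarith [sq_nonneg (f / J.l m), mul_le_mul_of_nonneg_right hκ (sq_nonneg (J.g m))]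

lemma hessianTest_other_le {γ : ℝ} (hγ : 0 ≤ γ) (hγ1 : γ ≤ 1) (hp : p ≤ 1) {m i : Fin n} {f : ℝ}
    (hfirst : J.g i * J.l m + J.h * J.C m m i - γ * J.l i * J.g i + f = 0) :
    (1 - γ) * J.g i ^ 2 + 2 * (J.g i * f) / J.l i
      ≤ J.h * (2 * J.g i * J.C m m i / J.l i) + J.h ^ 2 * (2 * J.C m m i ^ 2 / (J.l i * J.l m))
        + γ * (1 - p) * J.g i ^ 2
        - J.h * ((4 * J.g i * J.C m m i + 2 * (J.l m - J.l i) * J.g i ^ 2 / J.h) / J.l m) := by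
  have hh := J.h_pos
  have hli := J.l_pos i
  have hlm := J.l_pos m
  have hC : J.C m m i = (γ * J.l i * J.g i - J.g i * J.l m - f) / J.h := by
    rw [eq_div_iff hh.ne']
    linarith
  have hsquare : J.h * (2 * J.g i * J.C m m i / J.l i)
        + J.h ^ 2 * (2 * J.C m m i ^ 2 / (J.l i * J.l m)) + γ * (1 - p) * J.g i ^ 2
        - J.h * ((4 * J.g i * J.C m m i + 2 * (J.l m - J.l i) * J.g i ^ 2 / J.h) / J.l m)
      = 2 * (1 - γ) * J.g i ^ 2 + 2 * (J.g i * f) / J.l i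
        + 2 / (J.l i * J.l m) * ((1 - γ) * J.l i * J.g i + f) ^ 2
        + γ * (1 - p) * J.g i ^ 2 := by
    rw [hC]
    field_simp
    ring
  have hrest : 0 ≤ (1 - γ) * J.g i ^ 2 + 2 / (J.l i * J.l m) * ((1 - γ) * J.l i * J.g i + f) ^ 2
      + γ * (1 - p) * J.g i ^ 2 := by
    have := sub_nonneg.2 hγ1
    have := sub_nonneg.2 hp
    positivity
  rw [hsquare]
  linarith

lemma hessianTest_term_le {γ : ℝ} (hγ : 0 ≤ γ) (hγ1 : γ ≤ 1) (hp : p ≤ 1)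
    (hγp : 1 - γ ≤ (1 + γ) * (γ - p)) {m i : Fin n} {f : ℝ}
    (hfirst : J.g i * J.l m + J.h * J.C m m i - γ * J.l i * J.g i + f = 0) :
    (1 - γ) * J.g i ^ 2 + (if i = m then -(2 * γ) else 2) * (J.g i * f) / J.l i
      ≤ J.h * (2 * J.g i * J.C m m i / J.l i)
        + J.h ^ 2 * (if i = m then J.C m m i ^ 2 / J.l m ^ 2
            else 2 * J.C m m i ^ 2 / (J.l i * J.l m))
        + γ * (1 - p) * J.g i ^ 2 + (if i = m then (1 - p) * J.g m ^ 2 else 0)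
        - J.h * ((if i = m then 0
            else 4 * J.g i * J.C m m i + 2 * (J.l m - J.l i) * J.g i ^ 2 / J.h) / J.l m) := by
  split_ifs with him
  · subst him
    simp only [neg_mul, neg_div, zero_div, mul_zero, sub_zero]
    linarith [J.hessianTest_max_le hγp hfirst]
  · linarith [J.hessianTest_other_le hγ hγ1 hp hfirst]

lemma h_mul_rotationTerm_div (m : Fin n) :
    J.h * (J.rotationTerm m / J.l m) = 2 * J.h ^ 2
      - J.h * ((∑ i, if i = m then 0
          else 4 * J.g i * J.C m m i + 2 * (J.l m - J.l i) * J.g i ^ 2 / J.h) / J.l m) := by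
  have := (J.l_pos m).ne'
  rw [rotationTerm]
  field_simp

theorem hessianTest_nonpos (hn : 2 ≤ n) (hp : 1 - (n : ℝ) ≤ p) (hp1 : p < 1) {m : Fin n}
    (hm : ∀ i, J.l i ≤ J.l m) {f e : Fin n → ℝ}
    (hfirst : ∀ i, J.g i * J.l m + J.h * J.C m m i - (n - 1 + p) / n * J.l i * J.g i + f i = 0)
    (hsecond : ∀ i, J.l i * J.l m + 2 * J.g i * J.C m m i + J.h * J.Q i m
        + (if i = m then J.rotationTerm m else 0)
      - (n - 1 + p) / n * (J.l i ^ 2 + ∑ j, J.g j * J.C j i i - J.h * J.l i) + e i ≤ 0) :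
    ∃ c : Fin n → ℝ, (∀ i, |c i| ≤ 2) ∧ (1 - p) / n * ∑ i, J.g i ^ 2
      + ∑ i, (J.h * e i + c i * (J.g i * f i)) / J.l i ≤ 0 := by
  have hn2 : (2 : ℝ) ≤ n := by exact_mod_cast hn
  have hn0 : (0 : ℝ) < n := by linarith
  set γ : ℝ := (n - 1 + p) / n
  have hγn : γ * n = n - 1 + p := div_mul_cancel₀ _ hn0.ne'
  have hγ0 : 0 ≤ γ := div_nonneg (by linarith) hn0.le
  have hκ : (1 - p) / n = 1 - γ := by rw [div_eq_iff hn0.ne']; linarith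
  have hγ1 : 0 < 1 - γ := hκ ▸ div_pos (by linarith) hn0
  have hγp : 1 - γ ≤ (1 + γ) * (γ - p) := by
    have : γ - p = (n - 1) * (1 - γ) := by linarith
    nlinarith [mul_nonneg (sub_nonneg.2 hn2) (mul_nonneg (add_nonneg zero_le_one hγ0) hγ1.le),
      mul_nonneg hγ0 hγ1.le]
  rw [hκ]
  refine ⟨fun i => if i = m then -(2 * γ) else 2, fun i => ?_, ?_⟩
  · dsimp only
    split_ifs
    · rw [abs_neg, abs_of_nonneg (by linarith)]
      linarith
    · norm_num
  have hterms := Finset.sum_le_sum fun i (_ : i ∈ Finset.univ) =>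
    J.hessianTest_term_le hγ0 (sub_pos.1 hγ1).le hp1.le hγp (hfirst i)
  have hcubic := mul_le_mul_of_nonneg_left (J.sum_C_sq_le m) (sq_nonneg J.h)
  have hsummed := J.hessianTest_summed hm hγ0 hγn hsecond
  rw [J.h_mul_rotationTerm_div] at hsummed
  simp only [Finset.sum_add_distrib, Finset.sum_sub_distrib, ← Finset.mul_sum, ← Finset.sum_div,
    Finset.sum_ite_eq', Finset.mem_univ, if_true] at hterms
  simp only [add_div, Finset.sum_add_distrib, mul_div_assoc J.h, ← Finset.mul_sum]
  linarith

end HessianTest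

end MongeAmpereJet
end Jet

section TwoJet

variable {f g : ℝ → ℝ} {f₀ f₁ f₂ g₀ g₁ g₂ : ℝ}

/-- The function `f` is differentiable, with value `f₀`, derivative `f₁` and second derivative `f₂`
at `0`. -/
def HasTwoJet (f : ℝ → ℝ) (f₀ f₁ f₂ : ℝ) : Prop :=
  ∃ f' : ℝ → ℝ, (∀ t, HasDerivAt f (f' t) t) ∧ f 0 = f₀ ∧ f' 0 = f₁ ∧ HasDerivAt f' f₂ 0

namespace HasTwoJet

lemma congr_jet (hf : HasTwoJet f f₀ f₁ f₂) (h₀ : f₀ = g₀) (h₁ : f₁ = g₁) (h₂ : f₂ = g₂) :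
    HasTwoJet f g₀ g₁ g₂ :=
  h₀ ▸ h₁ ▸ h₂ ▸ hf

lemma add (hf : HasTwoJet f f₀ f₁ f₂) (hg : HasTwoJet g g₀ g₁ g₂) :
    HasTwoJet (fun t => f t + g t) (f₀ + g₀) (f₁ + g₁) (f₂ + g₂) := by
  obtain ⟨f', hf', rfl, rfl, hf''⟩ := hf
  obtain ⟨g', hg', rfl, rfl, hg''⟩ := hg
  exact ⟨fun t => f' t + g' t, fun t => (hf' t).add (hg' t), rfl, rfl, hf''.add hg''⟩

lemma mul (hf : HasTwoJet f f₀ f₁ f₂) (hg : HasTwoJet g g₀ g₁ g₂) :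
    HasTwoJet (fun t => f t * g t) (f₀ * g₀) (f₁ * g₀ + f₀ * g₁)
      (f₂ * g₀ + 2 * f₁ * g₁ + f₀ * g₂) := by
  obtain ⟨f', hf', rfl, rfl, hf''⟩ := hf
  obtain ⟨g', hg', rfl, rfl, hg''⟩ := hg
  refine ⟨fun t => f' t * g t + f t * g' t, fun t => (hf' t).mul (hg' t), rfl, rfl, ?_⟩
  exact ((hf''.mul (hg' 0)).add ((hf' 0).mul hg'')).congr_deriv (by ring)

lemma const (c : ℝ) : HasTwoJet (fun _ => c) c 0 0 :=
  ⟨fun _ => 0, fun t => hasDerivAt_const t c, rfl, rfl, hasDerivAt_const 0 0⟩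

lemma id : HasTwoJet (fun t => t) 0 1 0 :=
  ⟨fun _ => 1, fun t => hasDerivAt_id t, rfl, rfl, hasDerivAt_const 0 1⟩

lemma sum {ι : Type*} {s : Finset ι} {f : ι → ℝ → ℝ} {f₀ f₁ f₂ : ι → ℝ}
    (hf : ∀ i, HasTwoJet (f i) (f₀ i) (f₁ i) (f₂ i)) :
    HasTwoJet (fun t => ∑ i ∈ s, f i t) (∑ i ∈ s, f₀ i) (∑ i ∈ s, f₁ i) (∑ i ∈ s, f₂ i) := by
  choose f' hf' h₀ h₁ hf'' using hf
  exact ⟨fun t => ∑ i ∈ s, f' i t, fun t => HasDerivAt.fun_sum fun i _ => hf' i t,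
    by simp only [h₀], by simp only [h₁], HasDerivAt.fun_sum fun i _ => hf'' i⟩

lemma unique (hf : HasTwoJet f f₀ f₁ f₂)
    (hg : HasTwoJet f g₀ g₁ g₂) : f₀ = g₀ ∧ f₁ = g₁ ∧ f₂ = g₂ := by
  obtain ⟨f', hf', rfl, rfl, hf''⟩ := hf
  obtain ⟨g', hg', rfl, rfl, hg''⟩ := hg
  obtain rfl : f' = g' := funext fun t => (hf' t).unique (hg' t)
  exact ⟨rfl, rfl, hf''.unique hg''⟩

lemma exp (hf : HasTwoJet f f₀ f₁ f₂) :
    HasTwoJet (fun t => Real.exp (f t)) (Real.exp f₀) (Real.exp f₀ * f₁)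
      (Real.exp f₀ * (f₁ ^ 2 + f₂)) := by
  obtain ⟨f', hf', rfl, rfl, hf''⟩ := hf
  refine ⟨fun t => Real.exp (f t) * f' t, fun t => (hf' t).exp, rfl, rfl, ?_⟩
  exact ((hf' 0).exp.mul hf'').congr_deriv (by ring)

lemma eq_zero_and_nonpos_of_forall_le (hf : HasTwoJet f f₀ f₁ f₂) (h : ∀ t, f t ≤ f 0) :
    f₁ = 0 ∧ f₂ ≤ 0 := by
  obtain ⟨f', hf', -, rfl, hf''⟩ := hf
  have hmax : IsLocalMax f 0 := Filter.Eventually.of_forall h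
  exact ⟨hmax.hasDerivAt_eq_zero (hf' 0),
    deriv_deriv_nonpos_of_isLocalMax (Filter.Eventually.of_forall hf') hf'' hmax⟩

end HasTwoJet

lemma SmoothOffZero.hasTwoJet_line {E : Type*} [NormedAddCommGroup E] [NormedSpace ℝ E]
    {f : E → ℝ} (hf : SmoothOffZero f) {x v : E} (h : ∀ t : ℝ, x + t • v ≠ 0) :
    HasTwoJet (fun t => f (x + t • v)) (f x) (∂[v] f x) (∂[v] (∂[v] f) x) := by
  refine ⟨fun t => ∂[v] f (x + t • v), fun t => hf.hasDerivAt_line (h t), by simp, by simp, ?_⟩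
  simpa using (hf.dirDeriv v).hasDerivAt_line (h 0)

end TwoJet

section Homogeneity

variable {E : Type*} [NormedAddCommGroup E] [NormedSpace ℝ E] {f g : E → ℝ} {d k : ℤ}
  {x : E}

lemma PosHomogeneous.add (hf : PosHomogeneous d f)
    (hg : PosHomogeneous d g) : PosHomogeneous d fun x => f x + g x := by
  intro x hx t ht
  simp only [hf x hx t ht, hg x hx t ht, mul_add]

lemma PosHomogeneous.mul (hf : PosHomogeneous d f)
    (hg : PosHomogeneous k g) : PosHomogeneous (d + k) fun x => f x * g x := by
  intro x hx t ht
  simp only [hf x hx t ht, hg x hx t ht, zpow_add₀ ht.ne']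
  ring

lemma PosHomogeneous.const_mul (c : ℝ)
    (hf : PosHomogeneous d f) : PosHomogeneous d fun x => c * f x := by
  intro x hx t ht
  simp only [hf x hx t ht, mul_left_comm]

lemma PosHomogeneous.apply_inv_norm_smul (hf : PosHomogeneous 0 f) (hx : x ≠ 0) :
    f (‖x‖⁻¹ • x) = f x := by
  simpa using hf x hx _ (inv_pos.2 (norm_pos_iff.2 hx))

lemma PosHomogeneous.le_of_forall_norm_eq_one (hf : PosHomogeneous 0 f) {c : ℝ}
    (h : ∀ y, ‖y‖ = 1 → f y ≤ c) (hx : x ≠ 0) : f x ≤ c :=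
  hf.apply_inv_norm_smul hx ▸ h _ (norm_smul_inv_norm (𝕜 := ℝ) hx)

lemma PosHomogeneous.mul_dirDeriv_dirDeriv (h : PosHomogeneous 1 f) (hf : SmoothOffZero f) (v : E) :
    PosHomogeneous 0 fun y => f y * ∂[v] (∂[v] f) y :=
  h.mul ((h.dirDeriv hf v).dirDeriv (hf.dirDeriv v) v)

lemma SmoothOffZero.dirDeriv_dirDeriv_add_smul (hf : SmoothOffZero f) (c : ℝ) (v w : E)
    (hx : x ≠ 0) : ∂[v + c • w] (∂[v + c • w] f) x
      = ∂[v] (∂[v] f) x + 2 * (c * ∂[w] (∂[v] f) x) + c * c * ∂[w] (∂[w] f) x := by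
  simp only [dirDeriv_add_dir, dirDeriv_smul_dir, hf.dirDeriv_comm v (v + c • w) hx,
    hf.dirDeriv_comm w (v + c • w) hx, hf.dirDeriv_comm v w hx]
  ring

lemma SmoothOffZero.dirDeriv_dirDeriv_smul (hf : SmoothOffZero f) (c : ℝ) (v : E)
    (hx : x ≠ 0) : ∂[c • v] (∂[c • v] f) x = c ^ 2 * ∂[v] (∂[v] f) x := by
  rw [dirDeriv_smul_dir, hf.dirDeriv_comm _ _ hx, dirDeriv_smul_dir]
  ring

lemma PosHomogeneous.dirDeriv_self_dirDeriv_dirDeriv (h : PosHomogeneous 1 f)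
    (hf : SmoothOffZero f) (v w : E) (hx : x ≠ 0) :
    ∂[x] (∂[v] (∂[w] f)) x = -∂[v] (∂[w] f) x := by
  rw [((h.dirDeriv hf w).dirDeriv (hf.dirDeriv w) v).dirDeriv_self ((hf.dirDeriv w).dirDeriv v) hx]
  simp

lemma PosHomogeneous.dirDeriv_dirDeriv_dirDeriv_self (h : PosHomogeneous 1 f)
    (hf : SmoothOffZero f) (v w : E) (hx : x ≠ 0) :
    ∂[v] (∂[w] (∂[x] f)) x = -∂[v] (∂[w] f) x := by
  rw [hf.dirDeriv_dirDeriv_comm v w x hx, (hf.dirDeriv w).dirDeriv_comm v x hx,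
    h.dirDeriv_self_dirDeriv_dirDeriv hf v w hx]

lemma PosHomogeneous.dirDeriv_dirDeriv_dirDeriv_self_self (h : PosHomogeneous 1 f)
    (hf : SmoothOffZero f) (v : E) (hx : x ≠ 0) :
    ∂[v] (∂[v] (∂[x] (∂[x] f))) x = 2 * ∂[v] (∂[v] f) x := by
  have hvv := (h.dirDeriv hf v).dirDeriv (hf.dirDeriv v) v
  have hvv_smooth := (hf.dirDeriv v).dirDeriv v
  have hswap := hf.frameQuartic_comm ![v, x] hx 0 1
  simp only [frameQuartic, Matrix.cons_val_zero, Matrix.cons_val_one] at hswap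
  rw [hswap, (hvv.dirDeriv hvv_smooth x).dirDeriv_self (hvv_smooth.dirDeriv x) hx,
    hvv.dirDeriv_self hvv_smooth hx]
  push_cast
  ring

end Homogeneity

section GradientLaplacian

open scoped Laplacian

variable {E : Type*} [NormedAddCommGroup E] [InnerProductSpace ℝ E] [FiniteDimensional ℝ E]
  {ι : Type*} [Fintype ι] {f : E → ℝ} {x : E}

lemma norm_gradient_sq_eq_sum (b : OrthonormalBasis ι ℝ E) (f : E → ℝ) (x : E) :
    ‖gradient f x‖ ^ 2 = ∑ i, ∂[b i] f x ^ 2 := by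
  rw [← b.sum_sq_norm_inner_left]
  simp only [inner_gradient, Real.norm_eq_abs, sq_abs]

lemma SmoothOffZero.laplacian_eq_sum (b : OrthonormalBasis ι ℝ E) (hf : SmoothOffZero f)
    (hx : x ≠ 0) : Δ f x = ∑ i, ∂[b i] (∂[b i] f) x := by
  rw [InnerProductSpace.laplacian_eq_iteratedFDeriv_orthonormalBasis f b]
  simp [iteratedFDeriv_two_apply, hf.dirDeriv_dirDeriv_eq_fderiv _ _ hx]

lemma PosHomogeneous.norm_gradient_sq (h : PosHomogeneous 1 f) (hf : SmoothOffZero f) :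
    PosHomogeneous 0 fun y => ‖gradient f y‖ ^ 2 := by
  intro y hy t ht
  have hdir (v : E) := h.dirDeriv hf v y hy t ht
  simp_all [norm_gradient_sq_eq_sum (stdOrthonormalBasis ℝ E)]

lemma PosHomogeneous.mul_laplacian (h : PosHomogeneous 1 f) (hf : SmoothOffZero f) :
    PosHomogeneous 0 fun y => f y * Δ f y := by
  intro y hy t ht
  have hdir (v : E) := h.mul_dirDeriv_dirDeriv hf v y hy t ht
  simp_all [hf.laplacian_eq_sum (stdOrthonormalBasis ℝ E), Finset.mul_sum, ht.ne']

end GradientLaplacian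

section PerturbedMaximum

open scoped Laplacian

variable {n : ℕ} {p : ℝ} {H φ : Eu n → ℝ} {x : Eu n}
  {b : OrthonormalBasis (Fin (n + 1)) ℝ (Eu n)} {l : Fin n → ℝ}

lemma PrincipalFrame.dirDeriv_dirDeriv_apply (F : PrincipalFrame H x b l)
    (hH : IsMongeAmpereSolution p H) (v : Eu n) (i : Fin n) :
    ∂[v] (∂[b i.succ] H) x = l i * ⟪b i.succ, v⟫_ℝ := by
  rw [dirDeriv_eq_sum b v, Fin.sum_univ_succ, F.apply_zero,
    hH.posHomogeneous.dirDeriv_self_dirDeriv hH.smooth _ F.ne_zero, Finset.sum_eq_single i]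
  · rw [F.dirDeriv_dirDeriv_self]
    ring
  · intro j _ hji
    rw [F.dirDeriv_dirDeriv_of_ne hji, mul_zero]
  · simp

lemma PrincipalFrame.dirDeriv_dirDeriv_eq_sum (F : PrincipalFrame H x b l)
    (hH : IsMongeAmpereSolution p H) (v : Eu n) :
    ∂[v] (∂[v] H) x = ∑ i, l i * ⟪b i.succ, v⟫_ℝ ^ 2 := by
  rw [dirDeriv_eq_sum b v, Fin.sum_univ_succ, F.apply_zero,
    hH.posHomogeneous.dirDeriv_self_dirDeriv hH.smooth _ F.ne_zero, mul_zero, zero_add]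
  refine Finset.sum_congr rfl fun i _ => ?_
  rw [hH.smooth.dirDeriv_comm _ _ F.ne_zero, F.dirDeriv_dirDeriv_apply hH]
  ring

lemma PrincipalFrame.dirDeriv_dirDeriv_eq_ite (F : PrincipalFrame H x b l) (i j : Fin n) :
    ∂[b i.succ] (∂[b j.succ] H) x = if i = j then l i else 0 :=
  congrFun (congrFun F.hessianMatrix_eq i) j

lemma PrincipalFrame.add_smul_ne_zero (F : PrincipalFrame H x b l) (i : Fin n) (t : ℝ) :
    x + t • b i.succ ≠ 0 :=
  add_smul_ne_zero_of_inner_eq_zero F.ne_zero (F.inner_eq_zero i) t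

lemma PrincipalFrame.jet_h (F : PrincipalFrame H x b l) (hH : IsMongeAmpereSolution p H) :
    (F.jet hH).h = H x := rfl

lemma PrincipalFrame.jet_g (F : PrincipalFrame H x b l) (hH : IsMongeAmpereSolution p H)
    (i : Fin n) : (F.jet hH).g i = ∂[b i.succ] H x := rfl

lemma PrincipalFrame.jet_l (F : PrincipalFrame H x b l) (hH : IsMongeAmpereSolution p H) :
    (F.jet hH).l = l := rfl

lemma PrincipalFrame.hasTwoJet_norm_gradient_sq (F : PrincipalFrame H x b l)
    (hH : IsMongeAmpereSolution p H) (i : Fin n) :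
    HasTwoJet (fun t => ‖gradient H (x + t • b i.succ)‖ ^ 2) (‖gradient H x‖ ^ 2)
      (2 * ((F.jet hH).l i * (F.jet hH).g i))
      (2 * ((F.jet hH).l i ^ 2 + ∑ j, (F.jet hH).g j * (F.jet hH).C j i i
        - (F.jet hH).h * (F.jet hH).l i)) := by
  have hline (a : Fin (n + 1)) :=
    (hH.smooth.dirDeriv (b a)).hasTwoJet_line (F.add_smul_ne_zero i)
  simp only [norm_gradient_sq_eq_sum b, sq]
  refine (HasTwoJet.sum fun a => (hline a).mul (hline a)).congr_jet rfl ?_ ?_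
  · rw [Fin.sum_univ_succ, F.apply_zero,
      hH.posHomogeneous.dirDeriv_dirDeriv_self hH.smooth _ F.ne_zero]
    simp only [F.dirDeriv_dirDeriv_eq_ite, ite_mul, mul_ite, zero_mul, mul_zero,
      Finset.sum_add_distrib, Finset.sum_ite_eq, Finset.mem_univ, if_true]
    rw [F.jet_l, F.jet_g]
    ring
  · have hC (j : Fin n) : ∂[b i.succ] (∂[b i.succ] (∂[b j.succ] H)) x = (F.jet hH).C j i i :=
      ((F.jet hH).C_rotate i j).symm
    rw [Fin.sum_univ_succ, F.apply_zero,
      hH.posHomogeneous.dirDeriv_dirDeriv_self hH.smooth _ F.ne_zero,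
      hH.posHomogeneous.dirDeriv_dirDeriv_dirDeriv_self hH.smooth _ _ F.ne_zero,
      hH.posHomogeneous.dirDeriv_self hH.smooth F.ne_zero]
    simp only [F.dirDeriv_dirDeriv_eq_ite, hC, ite_mul, mul_ite, zero_mul, mul_zero, if_true,
      Finset.sum_add_distrib, Finset.sum_ite_eq, Finset.mem_univ]
    have hg (j : Fin n) : ∂[b j.succ] H x * (F.jet hH).C j i i
        = (F.jet hH).C j i i * ∂[b j.succ] H x := mul_comm _ _
    simp only [F.jet_l, F.jet_g, F.jet_h, hg]
    push_cast
    ring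

lemma PrincipalFrame.hasTwoJet_mul_laplacian (F : PrincipalFrame H x b l)
    (hH : IsMongeAmpereSolution p H) (i : Fin n) :
    HasTwoJet (fun t => H (x + t • b i.succ) * Δ H (x + t • b i.succ)) (H x * Δ H x)
      ((F.jet hH).g i * ∑ k, (F.jet hH).l k + (F.jet hH).h * ∑ k, (F.jet hH).C k k i)
      ((F.jet hH).l i * ∑ k, (F.jet hH).l k + 2 * (F.jet hH).g i * ∑ k, (F.jet hH).C k k i
        + (F.jet hH).h * (∑ k, (F.jet hH).Q k i + 2 * (F.jet hH).l i)) := by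
  have hline (a : Fin (n + 1)) :=
    ((hH.smooth.dirDeriv (b a)).dirDeriv (b a)).hasTwoJet_line (F.add_smul_ne_zero i)
  simp only [hH.smooth.laplacian_eq_sum b F.ne_zero,
    hH.smooth.laplacian_eq_sum b (F.add_smul_ne_zero i _)]
  have hrad := hH.posHomogeneous.dirDeriv_self_dirDeriv hH.smooth x F.ne_zero
  have hrad₁ : ∂[b i.succ] (∂[x] (∂[x] H)) x = 0 := by
    rw [hH.posHomogeneous.dirDeriv_dirDeriv_dirDeriv_self hH.smooth _ _ F.ne_zero,
      hH.posHomogeneous.dirDeriv_dirDeriv_self hH.smooth _ F.ne_zero, neg_zero]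
  have hrad₂ := hH.posHomogeneous.dirDeriv_dirDeriv_dirDeriv_self_self hH.smooth (b i.succ)
    F.ne_zero
  have hC (k : Fin n) : ∂[b i.succ] (∂[b k.succ] (∂[b k.succ] H)) x = (F.jet hH).C k k i :=
    (F.jet hH).C_rotate k i
  have hQ (k : Fin n) : ∂[b i.succ] (∂[b i.succ] (∂[b k.succ] (∂[b k.succ] H))) x
      = (F.jet hH).Q k i := (F.jet hH).Q_comm i k
  refine ((hH.smooth.hasTwoJet_line (F.add_smul_ne_zero i)).mul
    (HasTwoJet.sum hline)).congr_jet rfl ?_ ?_ <;>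
  · simp only [Fin.sum_univ_succ, F.apply_zero, hrad, hrad₁, hrad₂, hC, hQ,
      F.dirDeriv_dirDeriv_self, F.jet_g, F.jet_l, F.jet_h]
    ring

/-- At a maximum over pairs of unit vectors `(x, v)` of `G x v + φ x`, where `φ` is a perturbation
of degree zero, the derivative tests combine to an inequality in a principal frame which bounds
the gradient of `H`, with weight `κ`, by the first two derivatives of `φ`. -/
def HasMaximumEstimate (H : Eu n → ℝ) (G : Eu n → Eu n → ℝ) (κ : ℝ) : Prop :=
  ∀ φ : Eu n → ℝ, SmoothOffZero φ → PosHomogeneous 0 φ → ∀ x v : Eu n, ‖x‖ = 1 → ‖v‖ = 1 →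
    (∀ y u : Eu n, ‖y‖ = 1 → ‖u‖ = 1 → G y u + φ y ≤ G x v + φ x) →
    ∃ (b : OrthonormalBasis (Fin (n + 1)) ℝ (Eu n)) (l c : Fin n → ℝ),
      PrincipalFrame H x b l ∧ (∀ i, |c i| ≤ 2) ∧
      κ * ∑ i : Fin n, ∂[b i.succ] H x ^ 2
        + ∑ i : Fin n, (H x * ∂[b i.succ] (∂[b i.succ] φ) x
          + c i * (∂[b i.succ] H x * ∂[b i.succ] φ x)) / l i ≤ 0

lemma IsMongeAmpereSolution.hasMaximumEstimate_laplacian (hn : 0 < n)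
    (hH : IsMongeAmpereSolution p H) :
    HasMaximumEstimate H (fun x _ => H x * Δ H x - (n - 1 + p) / 2 * ‖gradient H x‖ ^ 2)
      ((n + 1 + p) * (n - 1) * (-1 - p) / n) := by
  intro φ hφ hφ0 x v hx hv hmax
  obtain ⟨b, l, F⟩ := hH.exists_principalFrame hx
  have hhom := ((hH.posHomogeneous.mul_laplacian hH.smooth).add
    ((hH.posHomogeneous.norm_gradient_sq hH.smooth).const_mul (-((n - 1 + p) / 2)))).add hφ0
  have hle {y : Eu n} (hy : y ≠ 0) := hhom.le_of_forall_norm_eq_one (x := y)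
    (c := H x * Δ H x + -((n - 1 + p) / 2) * ‖gradient H x‖ ^ 2 + φ x)
    (fun y hy => by linarith only [hmax y v hy hv]) hy
  have htest (i : Fin n) := (((F.hasTwoJet_mul_laplacian hH i).add
    ((HasTwoJet.const (-((n - 1 + p) / 2))).mul (F.hasTwoJet_norm_gradient_sq hH i))).add
    (hφ.hasTwoJet_line (F.add_smul_ne_zero i))).eq_zero_and_nonpos_of_forall_le
    fun t => by simpa using hle (F.add_smul_ne_zero i t)
  have hnonpos := (F.jet hH).laplacianTest_nonpos hn
    (f := fun i => ∂[b i.succ] φ x) (e := fun i => ∂[b i.succ] (∂[b i.succ] φ) x)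
    (fun i => (by ring : _ = _).trans (htest i).1)
    (fun i => (by ring : _ = _).trans_le (htest i).2)
  refine ⟨b, l, fun _ => 2, F, fun _ => by norm_num, hnonpos⟩

end PerturbedMaximum

section HessianMaximum

lemma SmoothOffZero.hasTwoJet_dirDeriv_dirDeriv_line {E : Type*} [NormedAddCommGroup E]
    [NormedSpace ℝ E] {f : E → ℝ} (hf : SmoothOffZero f) {x w : E}
    (h : ∀ t : ℝ, x + t • w ≠ 0) (v a : E) :
    HasTwoJet (fun t => ∂[v + t • a] (∂[v + t • a] f) (x + t • w))
      (∂[v] (∂[v] f) x)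
      (∂[w] (∂[v] (∂[v] f)) x + 2 * ∂[a] (∂[v] f) x)
      (∂[w] (∂[w] (∂[v] (∂[v] f))) x + 4 * ∂[w] (∂[a] (∂[v] f)) x + 2 * ∂[a] (∂[a] f) x) := by
  simp only [fun t : ℝ => hf.dirDeriv_dirDeriv_add_smul t v a (h t)]
  refine ((((hf.dirDeriv v).dirDeriv v).hasTwoJet_line h).add ((HasTwoJet.const 2).mul
    (HasTwoJet.id.mul (((hf.dirDeriv v).dirDeriv a).hasTwoJet_line h)))).add
    ((HasTwoJet.id.mul HasTwoJet.id).mul (((hf.dirDeriv a).dirDeriv a).hasTwoJet_line h))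
    |>.congr_jet ?_ ?_ ?_ <;> ring

lemma hasTwoJet_norm_add_smul_sq {E : Type*} [NormedAddCommGroup E] [InnerProductSpace ℝ E]
    (v a : E) :
    HasTwoJet (fun t => ‖v + t • a‖ ^ 2) (‖v‖ ^ 2) (2 * ⟪v, a⟫_ℝ) (2 * ‖a‖ ^ 2) := by
  have hexpand (t : ℝ) : ‖v + t • a‖ ^ 2 = ‖v‖ ^ 2 + t * (2 * ⟪v, a⟫_ℝ) + t * t * ‖a‖ ^ 2 := by
    rw [norm_add_sq_real, inner_smul_right, norm_smul, mul_pow, norm_eq_abs, sq_abs]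
    ring
  simp only [hexpand]
  refine ((HasTwoJet.const _).add (HasTwoJet.id.mul (HasTwoJet.const _))).add
    ((HasTwoJet.id.mul HasTwoJet.id).mul (HasTwoJet.const _)) |>.congr_jet ?_ ?_ ?_ <;> ring

lemma PosHomogeneous.mul_dirDeriv_dirDeriv_add_le {E : Type*} [NormedAddCommGroup E]
    [NormedSpace ℝ E] {f ψ : E → ℝ} (h : PosHomogeneous 1 f) (hf : SmoothOffZero f)
    (hψ : PosHomogeneous 0 ψ) {M : ℝ}
    (hle : ∀ y u, ‖y‖ = 1 → ‖u‖ = 1 → f y * ∂[u] (∂[u] f) y + ψ y ≤ M)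
    {y u : E} (hy : y ≠ 0) (hu : u ≠ 0) :
    f y * ∂[u] (∂[u] f) y + (ψ y - M) * ‖u‖ ^ 2 ≤ 0 := by
  have hunit : f y * ∂[‖u‖⁻¹ • u] (∂[‖u‖⁻¹ • u] f) y + ψ y ≤ M :=
    ((h.mul_dirDeriv_dirDeriv hf _).add hψ).le_of_forall_norm_eq_one
      (fun z hz => hle z _ hz (norm_smul_inv_norm (𝕜 := ℝ) hu)) hy
  have hu' := norm_ne_zero_iff.2 hu
  rw [hf.dirDeriv_dirDeriv_smul _ _ hy] at hunit
  have := mul_nonpos_of_nonpos_of_nonneg (sub_nonpos.2 hunit) (sq_nonneg ‖u‖)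
  field_simp at this
  linarith

variable {n : ℕ} {p : ℝ} {H φ : Eu n → ℝ} {x : Eu n}
  {b : OrthonormalBasis (Fin (n + 1)) ℝ (Eu n)} {l : Fin n → ℝ} {m : Fin n}

lemma PrincipalFrame.dirDeriv_dirDeriv_le_of_norm_eq_one (F : PrincipalFrame H x b l)
    (hH : IsMongeAmpereSolution p H) (hm : ∀ i, l i ≤ l m) {v : Eu n} (hv : ‖v‖ = 1) :
    ∂[v] (∂[v] H) x ≤ l m := by
  have hnorm := b.sum_sq_norm_inner_right v
  simp only [hv, norm_eq_abs, sq_abs, Fin.sum_univ_succ] at hnorm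
  calc ∂[v] (∂[v] H) x = ∑ i : Fin n, l i * ⟪b i.succ, v⟫_ℝ ^ 2 := F.dirDeriv_dirDeriv_eq_sum hH v
    _ ≤ ∑ i : Fin n, l m * ⟪b i.succ, v⟫_ℝ ^ 2 :=
      Finset.sum_le_sum fun i _ => mul_le_mul_of_nonneg_right (hm i) (sq_nonneg _)
    _ = l m * (1 - ⟪b 0, v⟫_ℝ ^ 2) := by
      rw [← Finset.mul_sum]
      congr 1
      linarith
    _ ≤ l m := mul_le_of_le_one_right (F.pos m).le (by linarith [sq_nonneg ⟪b 0, v⟫_ℝ])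

/-- The tests along the curve `t ↦ (x + t • b i.succ, b m.succ + t • a)`: the direction of the
second derivative may be rotated together with the base point. -/
lemma PrincipalFrame.hessianMaximum_test (F : PrincipalFrame H x b l)
    (hH : IsMongeAmpereSolution p H) (hφ : SmoothOffZero φ) (hφ0 : PosHomogeneous 0 φ) {γ : ℝ}
    (hmax : ∀ y u : Eu n, ‖y‖ = 1 → ‖u‖ = 1 → H y * ∂[u] (∂[u] H) y
      - γ / 2 * ‖gradient H y‖ ^ 2 + φ y ≤ H x * l m - γ / 2 * ‖gradient H x‖ ^ 2 + φ x)
    (i : Fin n) {a : Eu n} (ha : ⟪b m.succ, a⟫_ℝ = 0) :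
    (F.jet hH).g i * l m + H x * (F.jet hH).C m m i - γ * l i * (F.jet hH).g i
      + ∂[b i.succ] φ x = 0 ∧
    l i * l m + 2 * (F.jet hH).g i * (F.jet hH).C m m i + H x * (F.jet hH).Q i m
      + (4 * H x * ∂[a] (∂[b i.succ] (∂[b m.succ] H)) x
        + 2 * H x * (∂[a] (∂[a] H) x - l m * ‖a‖ ^ 2))
      - γ * (l i ^ 2 + ∑ j, (F.jet hH).g j * (F.jet hH).C j i i - H x * l i)
      + ∂[b i.succ] (∂[b i.succ] φ) x ≤ 0 := by
  have hline := F.add_smul_ne_zero i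
  set M := H x * l m - γ / 2 * ‖gradient H x‖ ^ 2 + φ x
  have hψ := ((hH.posHomogeneous.norm_gradient_sq hH.smooth).const_mul (-(γ / 2))).add hφ0
  have hle {y u : Eu n} (hy : y ≠ 0) (hu : u ≠ 0) :=
    hH.posHomogeneous.mul_dirDeriv_dirDeriv_add_le hH.smooth hψ (M := M)
      (fun y u hy hu => by linarith only [hmax y u hy hu]) hy hu
  have hunit := b.orthonormal.1 m.succ
  have hum : b m.succ ≠ 0 := norm_ne_zero_iff.1 (by simp [hunit])
  obtain ⟨htest₁, htest₂⟩ := (((hH.smooth.hasTwoJet_line hline).mul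
    (hH.smooth.hasTwoJet_dirDeriv_dirDeriv_line hline (b m.succ) a)).add
    (((((HasTwoJet.const (-(γ / 2))).mul (F.hasTwoJet_norm_gradient_sq hH i)).add
      (hφ.hasTwoJet_line hline)).add (HasTwoJet.const (-M))).mul
      (hasTwoJet_norm_add_smul_sq (b m.succ) a))).eq_zero_and_nonpos_of_forall_le fun t => by
        refine (hle (hline t) (add_smul_ne_zero_of_inner_eq_zero hum ha t)).trans_eq ?_
        simp only [zero_smul, add_zero, hunit, F.dirDeriv_dirDeriv_self]
        ring
  have hC : ∂[b i.succ] (∂[b m.succ] (∂[b m.succ] H)) x = (F.jet hH).C m m i :=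
    (F.jet hH).C_rotate m i
  have hQ : ∂[b i.succ] (∂[b i.succ] (∂[b m.succ] (∂[b m.succ] H))) x = (F.jet hH).Q i m := rfl
  simp only [hC, hQ, hunit, ha, F.dirDeriv_dirDeriv_self, F.dirDeriv_dirDeriv_apply hH,
    (hH.smooth.dirDeriv _).dirDeriv_comm (b i.succ) a F.ne_zero, F.jet_g, F.jet_l, F.jet_h]
    at htest₁ htest₂ ⊢
  exact ⟨(by ring : _ = _).trans htest₁, (by ring : _ = _).trans_le htest₂⟩

lemma PrincipalFrame.exists_rotation (F : PrincipalFrame H x b l)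
    (hH : IsMongeAmpereSolution p H) (m : Fin n) :
    ∃ a, ⟪b m.succ, a⟫_ℝ = 0 ∧ 4 * H x * ∂[a] (∂[b m.succ] (∂[b m.succ] H)) x
      + 2 * H x * (∂[a] (∂[a] H) x - l m * ‖a‖ ^ 2) = (F.jet hH).rotationTerm m := by
  set r : Fin n → ℝ := fun j => if j = m then 0 else (F.jet hH).g j / H x with hr
  set ρ : Fin (n + 1) → ℝ := Fin.cons (-1) (-r) with hρ
  set a : Eu n := ∑ k, ρ k • b k
  have hinner (k : Fin (n + 1)) : ⟪b k, a⟫_ℝ = ρ k := b.orthonormal.inner_right_fintype _ k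
  have hnorm : ‖a‖ ^ 2 = 1 + ∑ j, r j ^ 2 := by
    simp [← b.sum_sq_norm_inner_right a, hinner, hρ, Fin.sum_univ_succ]
  have hcubic : ∂[a] (∂[b m.succ] (∂[b m.succ] H)) x = l m - ∑ j, r j * (F.jet hH).C m m j := by
    have hC (j : Fin n) : ∂[b j.succ] (∂[b m.succ] (∂[b m.succ] H)) x = (F.jet hH).C m m j :=
      (F.jet hH).C_rotate m j
    rw [dirDeriv_eq_sum b a, Fin.sum_univ_succ, hinner, F.apply_zero,
      hH.posHomogeneous.dirDeriv_self_dirDeriv_dirDeriv hH.smooth _ _ F.ne_zero,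
      F.dirDeriv_dirDeriv_self]
    simp [hinner, hρ, hC, sub_eq_add_neg]
  have hpos := (hH.pos F.ne_zero).ne'
  refine ⟨a, by simp [hinner, hρ, hr], ?_⟩
  have hterm (j : Fin n) : (if j = m then 0 else 4 * (F.jet hH).g j * (F.jet hH).C m m j
        + 2 * (l m - l j) * (F.jet hH).g j ^ 2 / H x)
      = 4 * H x * (r j * (F.jet hH).C m m j) + 2 * H x * (l m * r j ^ 2 - l j * r j ^ 2) := by
    simp only [hr]
    split_ifs
    · ring
    · field_simp
  rw [MongeAmpereJet.rotationTerm, F.dirDeriv_dirDeriv_eq_sum hH, hnorm, hcubic, F.jet_h, F.jet_l]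
  simp only [hterm, hinner, hρ, Fin.cons_succ, Pi.neg_apply, neg_sq, Finset.sum_add_distrib,
    Finset.sum_sub_distrib, ← Finset.mul_sum]
  ring

lemma IsMongeAmpereSolution.hasMaximumEstimate_hessian (hn : 2 ≤ n) (hp : 1 - (n : ℝ) ≤ p)
    (hp1 : p < 1) (hH : IsMongeAmpereSolution p H) :
    HasMaximumEstimate H
      (fun x v => H x * ∂[v] (∂[v] H) x - (n - 1 + p) / n / 2 * ‖gradient H x‖ ^ 2)
      ((1 - p) / n) := by
  intro φ hφ hφ0 x v hx hv hmax
  obtain ⟨b, l, F⟩ := hH.exists_principalFrame hx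
  have : NeZero n := ⟨by omega⟩
  obtain ⟨m, hm⟩ := Finite.exists_max l
  have hvm := mul_le_mul_of_nonneg_left (F.dirDeriv_dirDeriv_le_of_norm_eq_one hH hm hv)
    (hH.pos F.ne_zero).le
  have htest (i : Fin n) {a : Eu n} (ha : ⟪b m.succ, a⟫_ℝ = 0) :=
    F.hessianMaximum_test hH hφ hφ0 (m := m) (γ := (n - 1 + p) / n)
      (fun y u hy hu => (hmax y u hy hu).trans (by linarith only [hvm])) i ha
  obtain ⟨a, ha, ha_rot⟩ := F.exists_rotation hH m
  obtain ⟨c, hc, hnonpos⟩ := (F.jet hH).hessianTest_nonpos hn hp hp1 hm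
    (f := fun i => ∂[b i.succ] φ x) (e := fun i => ∂[b i.succ] (∂[b i.succ] φ) x)
    (fun i => (htest i (inner_zero_right _)).1) fun i => by
      split_ifs with hi
      · subst hi
        exact ha_rot ▸ (htest i ha).2
      · simpa [dirDeriv, F.jet_l, F.jet_h] using (htest i (inner_zero_right _)).2
  exact ⟨b, l, c, F, hc, hnonpos⟩

end HessianMaximum

section HopfBarrier

variable {E : Type*} [NormedAddCommGroup E] [InnerProductSpace ℝ E] {x v : E}

/-- Exponential barrier on the unit sphere, concentrated at the pole `q`, extended with degree zero;
as in Hopf's boundary point lemma it is strictly convex enough, for large `A`, to perturb a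
maximum. -/
def hopfBarrier (ε A : ℝ) (q y : E) : ℝ := ε * exp (A * (⟪y, q⟫_ℝ / ‖y‖))

lemma smoothOffZero_inner_div_norm (q : E) : SmoothOffZero fun y => ⟪y, q⟫_ℝ / ‖y‖ :=
  (contDiffOn_id.inner ℝ contDiffOn_const).div (contDiffOn_id.norm ℝ fun _ hy => hy)
    fun _ hy => norm_ne_zero_iff.2 hy

lemma smoothOffZero_hopfBarrier (ε A : ℝ) (q : E) : SmoothOffZero (hopfBarrier ε A q) :=
  contDiffOn_const.mul (contDiffOn_const.mul (smoothOffZero_inner_div_norm q)).exp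

lemma posHomogeneous_hopfBarrier (ε A : ℝ) (q : E) : PosHomogeneous 0 (hopfBarrier ε A q) := by
  intro y _ t ht
  rw [hopfBarrier, real_inner_smul_left, norm_smul, norm_of_nonneg ht.le,
    mul_div_mul_left _ _ ht.ne', zpow_zero, one_mul, hopfBarrier]

lemma hopfBarrier_of_norm_eq_one (hx : ‖x‖ = 1) (ε A : ℝ) (q : E) :
    hopfBarrier ε A q x = ε * Real.exp (A * ⟪x, q⟫_ℝ) := by
  rw [hopfBarrier, hx, div_one]

lemma hasTwoJet_inner_div_norm (hx : ‖x‖ = 1) (hv : ‖v‖ = 1) (hxv : ⟪x, v⟫_ℝ = 0) (q : E) :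
    HasTwoJet (fun t => ⟪x + t • v, q⟫_ℝ / ‖x + t • v‖) ⟪x, q⟫_ℝ ⟪v, q⟫_ℝ (-⟪x, q⟫_ℝ) := by
  have hline := add_smul_ne_zero_of_inner_eq_zero (norm_ne_zero_iff.1 (hx ▸ one_ne_zero)) hxv
  have hnorm := SmoothOffZero.hasTwoJet_line (f := fun y : E => ‖y‖)
    (contDiffOn_id.norm ℝ fun _ hy => hy) hline
  have hquot := (smoothOffZero_inner_div_norm q).hasTwoJet_line hline
  obtain ⟨-, hnorm₁, hnorm₂⟩ := (hnorm.mul hnorm).unique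
    (by simpa only [sq] using hasTwoJet_norm_add_smul_sq x v)
  have hinner : HasTwoJet (fun t => ⟪x + t • v, q⟫_ℝ / ‖x + t • v‖ * ‖x + t • v‖)
      ⟪x, q⟫_ℝ ⟪v, q⟫_ℝ 0 := by
    have hlinear (t : ℝ) : ⟪x + t • v, q⟫_ℝ / ‖x + t • v‖ * ‖x + t • v‖
        = ⟪x, q⟫_ℝ + t * ⟪v, q⟫_ℝ := by
      rw [div_mul_cancel₀ _ (norm_ne_zero_iff.2 (hline t)), inner_add_left, real_inner_smul_left]
    simp only [hlinear]
    exact ((HasTwoJet.const _).add (HasTwoJet.id.mul (HasTwoJet.const _))).congr_jet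
      (by ring) (by ring) (by ring)
  obtain ⟨-, hquot₁, hquot₂⟩ := (hquot.mul hnorm).unique hinner
  simp only [hx, hv, hxv] at hnorm₁ hnorm₂ hquot₁ hquot₂
  have hzero : ∂[v] (fun y : E => ‖y‖) x = 0 := by linarith
  simp only [hzero, div_one] at hnorm₂ hquot₁ hquot₂
  refine hquot.congr_jet (by rw [hx, div_one]) (by linarith) ?_
  have htwo : ∂[v] (∂[v] fun y : E => ‖y‖) x = 1 := by linarith
  rw [htwo] at hquot₂
  linarith

lemma dirDeriv_hopfBarrier (hx : ‖x‖ = 1) (hv : ‖v‖ = 1) (hxv : ⟪x, v⟫_ℝ = 0) (ε A : ℝ) (q : E) :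
    ∂[v] (hopfBarrier ε A q) x = A * hopfBarrier ε A q x * ⟪v, q⟫_ℝ ∧
    ∂[v] (∂[v] (hopfBarrier ε A q)) x
      = A * hopfBarrier ε A q x * (A * ⟪v, q⟫_ℝ ^ 2 - ⟪x, q⟫_ℝ) := by
  have hline := add_smul_ne_zero_of_inner_eq_zero (norm_ne_zero_iff.1 (hx ▸ one_ne_zero)) hxv
  obtain ⟨-, h₁, h₂⟩ := ((smoothOffZero_hopfBarrier ε A q).hasTwoJet_line hline).unique
    ((HasTwoJet.const ε).mul
      ((HasTwoJet.const A).mul (hasTwoJet_inner_div_norm hx hv hxv q)).exp)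
  rw [h₁, h₂, hopfBarrier_of_norm_eq_one hx]
  constructor <;> ring

end HopfBarrier

section StrongMaximumPrinciple

open scoped Laplacian

lemma barrier_numerator_ge {Λ A h s g c σ : ℝ} (hΛ : 0 < Λ) (hA : 8 * Λ ^ 4 ≤ A) (hh : Λ⁻¹ ≤ h)
    (hg : |g| ≤ Λ) (hc : |c| ≤ 2) :
    A * σ ^ 2 / (2 * Λ) - h * s - 1 / (4 * Λ) ≤ h * (A * σ ^ 2 - s) + c * (g * σ) := by
  have hcross : -(2 * Λ * |σ|) ≤ c * (g * σ) := by
    refine neg_le_of_neg_le ((neg_le_abs _).trans ?_)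
    rw [abs_mul, abs_mul, ← mul_assoc]
    gcongr
  have hsq : Λ⁻¹ * (A * σ ^ 2) ≤ h * (A * σ ^ 2) := by
    have : 0 ≤ A := le_trans (by positivity) hA
    gcongr
  have hamgm : 2 * Λ * |σ| ≤ A * σ ^ 2 / (2 * Λ) + 1 / (4 * Λ) := by
    rw [div_add_div _ _ (by positivity) (by positivity), le_div_iff₀ (by positivity), ← sq_abs σ]
    nlinarith [mul_le_mul_of_nonneg_right hA (mul_nonneg hΛ.le (sq_nonneg |σ|)),
      mul_nonneg hΛ.le (sq_nonneg (4 * Λ ^ 2 * |σ| - 1))]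
  have hhalf : A * σ ^ 2 / (2 * Λ) = Λ⁻¹ * (A * σ ^ 2) / 2 := by field_simp
  linarith

lemma barrier_sum_pos {ι : Type*} [Fintype ι] [Nonempty ι] {Λ A h s δ : ℝ} (hA : 8 * Λ ^ 4 ≤ A)
    (hAδ : 8 * Fintype.card ι * Λ ^ 4 < A * δ) (hΛ : 0 < Λ) (hh : Λ⁻¹ ≤ h) (hh' : h ≤ Λ)
    {l g c σ : ι → ℝ} (hl : ∀ i, Λ⁻¹ ≤ l i) (hl' : ∀ i, l i ≤ Λ) (hg : ∀ i, |g i| ≤ Λ)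
    (hc : ∀ i, |c i| ≤ 2) (hδ : 0 < δ) (hsδ : s ≤ 1 - δ) (hσ : ∑ i, σ i ^ 2 = 1 - s ^ 2) :
    0 < ∑ i, (h * (A * σ i ^ 2 - s) + c i * (g i * σ i)) / l i := by
  have hΛinv := inv_pos.2 hΛ
  have hl0 (i : ι) : 0 < l i := hΛinv.trans_le (hl i)
  have hA0 : 0 ≤ A := le_trans (by positivity) hA
  have hlower (i : ι) := barrier_numerator_ge (s := s) (σ := σ i) hΛ hA hh (hg i) (hc i)
  have hquarter : 1 / (4 * Λ) = Λ⁻¹ / 4 := by field_simp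
  rcases le_or_gt s (-1 / 2) with hs | hs
  · refine Finset.sum_pos (fun i _ => div_pos ((hlower i).trans_lt' ?_) (hl0 i))
      Finset.univ_nonempty
    have : 0 ≤ A * σ i ^ 2 / (2 * Λ) := by positivity
    nlinarith
  · have hterm (i : ι) : A / (2 * Λ ^ 2) * σ i ^ 2 - 2 * Λ ^ 2
        ≤ (h * (A * σ i ^ 2 - s) + c i * (g i * σ i)) / l i := by
      rw [le_div_iff₀ (hl0 i)]
      have hupper : A / (2 * Λ ^ 2) * σ i ^ 2 * l i ≤ A * σ i ^ 2 / (2 * Λ) :=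
        (mul_le_mul_of_nonneg_left (hl' i) (by positivity)).trans_eq (by field_simp)
      have hconst : 2 * Λ ≤ 2 * Λ ^ 2 * l i :=
        (mul_le_mul_of_nonneg_left (hl i) (by positivity)).trans_eq' (by field_simp)
      nlinarith [hlower i]
    have hcard : 0 < A / (2 * Λ ^ 2) * (δ / 2) - Fintype.card ι * (2 * Λ ^ 2) := by
      field_simp
      linarith
    calc 0 < A / (2 * Λ ^ 2) * (δ / 2) - Fintype.card ι * (2 * Λ ^ 2) := hcard
      _ ≤ A / (2 * Λ ^ 2) * ∑ i, σ i ^ 2 - Fintype.card ι * (2 * Λ ^ 2) := by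
        rw [hσ]
        gcongr
        nlinarith
      _ = ∑ i, (A / (2 * Λ ^ 2) * σ i ^ 2 - 2 * Λ ^ 2) := by
        simp [Finset.mul_sum, Finset.sum_sub_distrib]
      _ ≤ _ := Finset.sum_le_sum fun i _ => hterm i

lemma exists_isMaxOn_add_of_max_pos {X : Type*} [TopologicalSpace X] {K : Set X}
    (hK : IsCompact K) {G w : X → ℝ} (hG : ContinuousOn G K) (hw : ContinuousOn w K) {z₀ : X}
    (hz₀ : z₀ ∈ K) (hpos : ∀ z ∈ K, 0 < max (w z) (G z₀ - G z)) :
    ∃ δ > 0, ∀ φ : X → ℝ, ContinuousOn φ K → (∀ z ∈ K, 0 ≤ φ z ∧ φ z < δ) →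
      ∃ z ∈ K, IsMaxOn (fun z => G z + φ z) K z ∧ δ ≤ w z := by
  obtain ⟨δ, hδ, hle⟩ := hK.exists_forall_le' (hw.sup (continuousOn_const.sub hG)) hpos
  refine ⟨δ, hδ, fun φ hφ hφδ => ?_⟩
  obtain ⟨z, hz, hmax⟩ := hK.exists_isMaxOn ⟨z₀, hz₀⟩ (hG.add hφ)
  refine ⟨z, hz, hmax, (le_max_iff.1 (hle z hz)).resolve_right fun hfar => ?_⟩
  have hz₀z : G z₀ + φ z₀ ≤ G z + φ z := hmax hz₀
  have hgap : δ ≤ G z₀ - G z := hfar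
  linarith [(hφδ z₀ hz₀).1, (hφδ z hz).2]

lemma SmoothOffZero.continuousOn_dirDeriv {E : Type*} [NormedAddCommGroup E] [NormedSpace ℝ E]
    {f : E → ℝ} (hf : SmoothOffZero f) :
    ContinuousOn (fun z : E × E => ∂[z.2] f z.1) {z | z.1 ≠ 0} := by
  have hfderiv : ContinuousOn (fderiv ℝ f) {0}ᶜ :=
    fun x hx => (hf.differentiableAt_fderiv hx).continuousAt.continuousWithinAt
  exact (hfderiv.comp continuousOn_fst fun z hz => hz).clm_apply continuousOn_snd

lemma SmoothOffZero.continuousOn_dirDeriv_dirDeriv {E : Type*} [NormedAddCommGroup E]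
    [NormedSpace ℝ E] {f : E → ℝ} (hf : SmoothOffZero f) :
    ContinuousOn (fun z : E × E => ∂[z.2] (∂[z.2] f) z.1) {z | z.1 ≠ 0} := by
  have hfderiv : ContinuousOn (fderiv ℝ (fderiv ℝ f)) {0}ᶜ :=
    ((contDiffOn_infty_iff_fderiv_of_isOpen isOpen_compl_singleton).1
      ((contDiffOn_infty_iff_fderiv_of_isOpen isOpen_compl_singleton).1 hf).2).2.continuousOn
  refine (((hfderiv.comp continuousOn_fst fun z hz => hz).clm_apply continuousOn_snd).clm_apply
    continuousOn_snd).congr fun z hz => ?_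
  exact hf.dirDeriv_dirDeriv_eq_fderiv _ _ hz

lemma SmoothOffZero.continuousOn_norm_gradient_sq {E : Type*} [NormedAddCommGroup E]
    [InnerProductSpace ℝ E] [FiniteDimensional ℝ E] {f : E → ℝ} (hf : SmoothOffZero f) :
    ContinuousOn (fun y => ‖gradient f y‖ ^ 2) {0}ᶜ := by
  simp only [norm_gradient_sq_eq_sum (stdOrthonormalBasis ℝ E)]
  exact continuousOn_finsetSum _ fun i _ => (hf.dirDeriv _).continuousOn.pow 2

lemma SmoothOffZero.continuousOn_laplacian {E : Type*} [NormedAddCommGroup E]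
    [InnerProductSpace ℝ E] [FiniteDimensional ℝ E] {f : E → ℝ} (hf : SmoothOffZero f) :
    ContinuousOn (Δ f) {0}ᶜ :=
  (continuousOn_finsetSum _ fun _ _ => ((hf.dirDeriv _).dirDeriv _).continuousOn).congr
    fun _ hy => hf.laplacian_eq_sum (stdOrthonormalBasis ℝ E) hy

variable {n : ℕ} {p : ℝ} {H : Eu n → ℝ}

lemma IsMongeAmpereSolution.exists_uniform_bound (hH : IsMongeAmpereSolution p H) :
    ∃ Λ > 0, ∀ {x b l}, PrincipalFrame H x b l → ∀ i : Fin n, Λ⁻¹ ≤ H x ∧ H x ≤ Λ ∧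
      Λ⁻¹ ≤ l i ∧ l i ≤ Λ ∧ |∂[b i.succ] H x| ≤ Λ := by
  set T : Set (Eu n × Eu n) := (sphere 0 1 ×ˢ sphere 0 1) ∩ {z | ⟪z.1, z.2⟫_ℝ = 0}
  have hT : IsCompact T := ((isCompact_sphere 0 1).prod (isCompact_sphere 0 1)).inter_right
    (isClosed_eq (by fun_prop) (by fun_prop))
  have hne {z : Eu n × Eu n} (hz : z ∈ T) : z.1 ≠ 0 ∧ z.2 ≠ 0 :=
    ⟨ne_of_mem_sphere hz.1.1 one_ne_zero, ne_of_mem_sphere hz.1.2 one_ne_zero⟩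
  have hpos {z : Eu n × Eu n} (hz : z ∈ T) : 0 < H z.1 ∧ 0 < ∂[z.2] (∂[z.2] H) z.1 :=
    ⟨hH.pos (hne hz).1, hH.posDef (by simpa using hz.1.1) hz.2 (hne hz).2⟩
  have hsub : T ⊆ {z | z.1 ≠ 0} := fun z hz => (hne hz).1
  have hH₀ : ContinuousOn (fun z : Eu n × Eu n => H z.1) T :=
    hH.smooth.continuousOn.comp continuousOn_fst fun z hz => hsub hz
  have hH₂ := hH.smooth.continuousOn_dirDeriv_dirDeriv.mono hsub
  obtain ⟨C, hC⟩ := hT.exists_bound_of_continuousOn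
    (((((hH₀.add (hH₀.inv₀ fun z hz => (hpos hz).1.ne')).add hH₂).add
      (hH₂.inv₀ fun z hz => (hpos hz).2.ne'))).add (hH.smooth.continuousOn_dirDeriv.mono hsub).abs)
  refine ⟨max C 1, by positivity, fun {x b l} F i => ?_⟩
  have hmem : (x, b i.succ) ∈ T :=
    ⟨⟨by simp [F.norm_eq_one], by simp⟩, F.inner_eq_zero i⟩
  have hsum : H x + (H x)⁻¹ + l i + (l i)⁻¹ + |∂[b i.succ] H x| ≤ max C 1 :=
    F.dirDeriv_dirDeriv_self i ▸ (le_abs_self _).trans ((hC _ hmem).trans (le_max_left C 1))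
  have hHpos := (hpos hmem).1
  have hHinv := inv_pos.2 hHpos
  have hlinv := inv_pos.2 (F.pos i)
  have habs := abs_nonneg (∂[b i.succ] H x)
  have hl := F.pos i
  exact ⟨inv_le_of_inv_le₀ hHpos (by linarith), by linarith,
    inv_le_of_inv_le₀ hl (by linarith), by linarith, by linarith⟩

lemma exists_hopfBarrier_parameters {N Λ δ : ℝ} (hN : 0 ≤ N) (hΛ : 0 < Λ) (hδ : 0 < δ) :
    ∃ A ε, 0 < ε ∧ 8 * Λ ^ 4 ≤ A ∧ 8 * N * Λ ^ 4 < A * δ ∧ ∀ s ≤ 1, ε * rexp (A * s) < δ := by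
  set A : ℝ := 8 * Λ ^ 4 * (N / δ + 1) with hA
  refine ⟨A, δ / 2 * rexp (-A), by positivity, ?_, ?_, fun s hs => ?_⟩
  · exact le_mul_of_one_le_right (by positivity) (le_add_of_nonneg_left (by positivity))
  · calc 8 * N * Λ ^ 4 < 8 * N * Λ ^ 4 + 8 * Λ ^ 4 * δ := lt_add_of_pos_right _ (by positivity)
      _ = A * δ := by rw [hA]; field_simp
  · calc δ / 2 * rexp (-A) * rexp (A * s) ≤ δ / 2 * rexp (-A) * rexp A := by
          gcongr
          exact mul_le_of_le_one_right (by positivity) hs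
      _ = δ / 2 := by rw [mul_assoc, ← Real.exp_add, neg_add_cancel, Real.exp_zero, mul_one]
      _ < δ := half_lt_self hδ

lemma PrincipalFrame.hopfBarrier_sum_pos [Nonempty (Fin n)] {x q : Eu n}
    {b : OrthonormalBasis (Fin (n + 1)) ℝ (Eu n)} {l c : Fin n → ℝ} {Λ A δ ε : ℝ}
    (F : PrincipalFrame H x b l) (hΛ : 0 < Λ)
    (hbound : ∀ i : Fin n, Λ⁻¹ ≤ H x ∧ H x ≤ Λ ∧ Λ⁻¹ ≤ l i ∧ l i ≤ Λ ∧ |∂[b i.succ] H x| ≤ Λ)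
    (hc : ∀ i, |c i| ≤ 2) (hA : 8 * Λ ^ 4 ≤ A) (hAδ : 8 * n * Λ ^ 4 < A * δ) (hδ : 0 < δ)
    (hε : 0 < ε) (hq : ‖q‖ = 1) (hxq : ⟪x, q⟫_ℝ ≤ 1 - δ) :
    0 < ∑ i : Fin n, (H x * ∂[b i.succ] (∂[b i.succ] (hopfBarrier ε A q)) x
      + c i * (∂[b i.succ] H x * ∂[b i.succ] (hopfBarrier ε A q) x)) / l i := by
  have i₀ := Classical.arbitrary (Fin n)
  have hA0 : 0 < A := lt_of_lt_of_le (by positivity) hA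
  have hφ : 0 < hopfBarrier ε A q x := mul_pos hε (exp_pos _)
  have hσ : ∑ i : Fin n, ⟪b i.succ, q⟫_ℝ ^ 2 = 1 - ⟪x, q⟫_ℝ ^ 2 := by
    have hsum := b.sum_sq_norm_inner_right q
    rw [Fin.sum_univ_succ, F.apply_zero, hq] at hsum
    simp only [norm_eq_abs, sq_abs] at hsum
    linarith
  have hpos := barrier_sum_pos hA (by simpa using hAδ) hΛ (hbound i₀).1 (hbound i₀).2.1
    (fun i => (hbound i).2.2.1) (fun i => (hbound i).2.2.2.1) (fun i => (hbound i).2.2.2.2)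
    hc hδ hxq hσ
  refine (mul_pos (mul_pos hA0 hφ) hpos).trans_eq ?_
  rw [Finset.mul_sum]
  refine Finset.sum_congr rfl fun i _ => ?_
  have hbi := b.orthonormal.1 i.succ
  obtain ⟨h₁, h₂⟩ := dirDeriv_hopfBarrier F.norm_eq_one hbi (F.inner_eq_zero i) ε A q
  rw [h₁, h₂]
  ring

/-- Otherwise Hopf's barrier centred at a point over which the maximum is not attained would move
the maximum to a place where the estimate fails. -/
lemma HasMaximumEstimate.exists_eq_max {G : Eu n → Eu n → ℝ} {κ : ℝ}
    (hG : HasMaximumEstimate H G κ) (hκ : 0 ≤ κ) (hn : 0 < n) (hH : IsMongeAmpereSolution p H)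
    (hGc : ContinuousOn (fun z : Eu n × Eu n => G z.1 z.2) (sphere 0 1 ×ˢ sphere 0 1)) :
    ∃ M, (∀ y u : Eu n, ‖y‖ = 1 → ‖u‖ = 1 → G y u ≤ M) ∧
      ∀ q : Eu n, ‖q‖ = 1 → ∃ u : Eu n, ‖u‖ = 1 ∧ G q u = M := by
  have : Nonempty (Fin n) := ⟨⟨0, hn⟩⟩
  have hS := (isCompact_sphere (0 : Eu n) 1).prod (isCompact_sphere (0 : Eu n) 1)
  have hmem {y u : Eu n} (hy : ‖y‖ = 1) (hu : ‖u‖ = 1) :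
      (y, u) ∈ sphere (0 : Eu n) 1 ×ˢ sphere (0 : Eu n) 1 := by simp [hy, hu]
  obtain ⟨z₀, hz₀, hmax⟩ := hS.exists_isMaxOn
    ((NormedSpace.sphere_nonempty.2 zero_le_one).prod (NormedSpace.sphere_nonempty.2 zero_le_one))
    hGc
  have hle {y u : Eu n} (hy : ‖y‖ = 1) (hu : ‖u‖ = 1) : G y u ≤ G z₀.1 z₀.2 := hmax (hmem hy hu)
  refine ⟨G z₀.1 z₀.2, fun y u hy hu => hle hy hu, fun q hq => by_contra fun hno => ?_⟩
  push Not at hno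
  obtain ⟨δ, hδ, hperturb⟩ := exists_isMaxOn_add_of_max_pos hS hGc
    (w := fun z => 1 - ⟪z.1, q⟫_ℝ) (by fun_prop) hz₀ fun z hz => by
      have hz1 : ‖z.1‖ = 1 := by simpa using hz.1
      have hz2 : ‖z.2‖ = 1 := by simpa using hz.2
      rcases eq_or_ne z.1 q with hzq | hzq
      · exact lt_max_of_lt_right (sub_pos.2 (lt_of_le_of_ne (hle hz1 hz2)
          (hzq ▸ hno z.2 hz2)))
      · exact lt_max_of_lt_left (sub_pos.2 ((inner_lt_one_iff_real_of_norm_eq_one hz1 hq).2 hzq))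
  obtain ⟨Λ, hΛ, hbound⟩ := hH.exists_uniform_bound
  obtain ⟨A, ε, hε, hA, hAδ, hsmall⟩ := exists_hopfBarrier_parameters n.cast_nonneg hΛ hδ
  have hφ := smoothOffZero_hopfBarrier ε A q
  obtain ⟨z, hz, hzmax, hzδ⟩ := hperturb (fun z => hopfBarrier ε A q z.1)
    (hφ.continuousOn.comp continuousOn_fst fun z hz => ne_of_mem_sphere hz.1 one_ne_zero)
    fun z hz => by
      have hz1 : ‖z.1‖ = 1 := by simpa using hz.1
      rw [hopfBarrier_of_norm_eq_one hz1]
      have hinner : ⟪z.1, q⟫_ℝ ≤ 1 := by simpa [hz1, hq] using real_inner_le_norm z.1 q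
      exact ⟨by positivity, hsmall _ hinner⟩
  obtain ⟨b, l, c, F, hc, hnonpos⟩ := hG _ hφ (posHomogeneous_hopfBarrier ε A q) z.1 z.2
    (by simpa using hz.1) (by simpa using hz.2) fun y u hy hu => hzmax (hmem hy hu)
  have hpos := F.hopfBarrier_sum_pos hΛ (hbound F) hc hA hAδ hδ hε hq
    (by linarith : ⟪z.1, q⟫_ℝ ≤ 1 - δ)
  have hgrad : 0 ≤ κ * ∑ i : Fin n, ∂[b i.succ] H z.1 ^ 2 := by positivity
  linarith

lemma HasMaximumEstimate.dirDeriv_eq_zero {G : Eu n → Eu n → ℝ} {κ : ℝ}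
    (hG : HasMaximumEstimate H G κ) (hκ : 0 < κ) (hn : 0 < n) (hH : IsMongeAmpereSolution p H)
    (hGc : ContinuousOn (fun z : Eu n × Eu n => G z.1 z.2) (sphere 0 1 ×ˢ sphere 0 1))
    {x v : Eu n} (hx : ‖x‖ = 1) (hxv : ⟪x, v⟫_ℝ = 0) : ∂[v] H x = 0 := by
  obtain ⟨M, hM, hattained⟩ := hG.exists_eq_max hκ.le hn hH hGc
  obtain ⟨u, hu, hxu⟩ := hattained x hx
  obtain ⟨b, l, c, F, -, hnonpos⟩ := hG (fun _ => 0) contDiffOn_const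
    (fun _ _ _ _ => (mul_zero _).symm) x u hx hu fun y w hy hw => by simpa [hxu] using hM y w hy hw
  have hconst (w : Eu n) : ∂[w] (fun _ : Eu n => (0 : ℝ)) = fun _ => 0 := by
    ext
    simp [dirDeriv]
  have hsum : ∑ i : Fin n, ∂[b i.succ] H x ^ 2 ≤ 0 :=
    nonpos_of_mul_nonpos_right (by simpa [hconst] using hnonpos) hκ
  have hzero (i : Fin n) : ∂[b i.succ] H x = 0 :=
    (pow_eq_zero_iff two_ne_zero).1 (congrFun ((Fintype.sum_eq_zero_iff_of_nonneg
      fun i => sq_nonneg (∂[b i.succ] H x)).1 (hsum.antisymm (by positivity))) i)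
  rw [dirDeriv_eq_sum b v, Fin.sum_univ_succ, F.apply_zero, hxv]
  simp [hzero]

end StrongMaximumPrinciple

section ConstantOnSphere

variable {E : Type*} [NormedAddCommGroup E] [InnerProductSpace ℝ E] {f : E → ℝ} {x v : E}

lemma PosHomogeneous.dirDeriv_eq_zero_of_inner_eq_zero (h : PosHomogeneous 1 f)
    (hf : SmoothOffZero f) (hzero : ∀ y w : E, ‖y‖ = 1 → ⟪y, w⟫_ℝ = 0 → ∂[w] f y = 0)
    (hx : x ≠ 0) (hxv : ⟪x, v⟫_ℝ = 0) : ∂[v] f x = 0 := by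
  rw [← (h.dirDeriv hf v).apply_inv_norm_smul hx]
  exact hzero _ v (norm_smul_inv_norm (𝕜 := ℝ) hx) (by rw [real_inner_smul_left, hxv, mul_zero])

lemma PosHomogeneous.dirDeriv_dirDeriv_eq_self (h : PosHomogeneous 1 f) (hf : SmoothOffZero f)
    (hzero : ∀ y w : E, ‖y‖ = 1 → ⟪y, w⟫_ℝ = 0 → ∂[w] f y = 0) (hx : ‖x‖ = 1) (hv : ‖v‖ = 1)
    (hxv : ⟪x, v⟫_ℝ = 0) : ∂[v] (∂[v] f) x = f x := by
  have hx0 : x ≠ 0 := norm_ne_zero_iff.1 (hx ▸ one_ne_zero)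
  have hline := add_smul_ne_zero_of_inner_eq_zero hx0 hxv
  have hderiv (t : ℝ) : ∂[v] f (x + t • v) = t * ∂[x] f (x + t • v) := by
    have htangent : ⟪x + t • v, v + (-t) • x⟫_ℝ = 0 := by
      simp [inner_add_left, inner_add_right, inner_smul_left, inner_smul_right, hx, hv, hxv,
        real_inner_comm]
    have hvanish := h.dirDeriv_eq_zero_of_inner_eq_zero hf hzero (hline t) htangent
    rw [dirDeriv_add_dir, dirDeriv_smul_dir] at hvanish
    linarith
  have hleft := (hf.dirDeriv v).hasDerivAt_line (hline 0)
  have hright := (hasDerivAt_id 0).mul ((hf.dirDeriv x).hasDerivAt_line (hline 0))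
  have heq := (hright.congr_of_eventuallyEq (Filter.Eventually.of_forall hderiv)).unique hleft
  simpa [h.dirDeriv_self hf hx0] using heq.symm

variable {n : ℕ} {p : ℝ} {H : Eu n → ℝ}

lemma IsMongeAmpereSolution.eq_one_of_dirDeriv_eq_zero (hp : p ≠ n + 1)
    (hH : IsMongeAmpereSolution p H)
    (hzero : ∀ y w : Eu n, ‖y‖ = 1 → ⟪y, w⟫_ℝ = 0 → ∂[w] H y = 0) {x : Eu n} (hx : ‖x‖ = 1) :
    H x = 1 := by
  obtain ⟨b, l, F⟩ := hH.exists_principalFrame hx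
  have hl (i : Fin n) : l i = H x := by
    rw [← F.dirDeriv_dirDeriv_self, hH.posHomogeneous.dirDeriv_dirDeriv_eq_self hH.smooth hzero hx
      (b.orthonormal.1 _) (F.inner_eq_zero i)]
  have hpos := hH.pos F.ne_zero
  have hdet := hH.det_eq b hx
  simp only [F.hessianMatrix_eq, Matrix.det_diagonal, hl, F.apply_zero, hx, Finset.prod_const,
    Finset.card_univ, Fintype.card_fin, real_inner_self_eq_norm_sq, one_pow, one_mul] at hdet
  have hlog : (n + 1 - p) * Real.log (H x) = 0 := by
    have := congrArg Real.log hdet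
    rw [Real.log_pow, Real.log_rpow hpos] at this
    linarith
  exact eq_one_of_pos_of_log_eq_zero hpos
    ((mul_eq_zero.1 hlog).resolve_left (sub_ne_zero.2 hp.symm))

lemma IsMongeAmpereSolution.eq_one_of_two_le (hn : 2 ≤ n) (hp : -(n : ℝ) - 1 < p) (hp1 : p < 1)
    (hH : IsMongeAmpereSolution p H) {x : Eu n} (hx : ‖x‖ = 1) : H x = 1 := by
  have hn2 : (2 : ℝ) ≤ n := by exact_mod_cast hn
  have hn0 : 0 < n := by omega
  have hne {z : Eu n × Eu n} (hz : z ∈ sphere (0 : Eu n) 1 ×ˢ sphere (0 : Eu n) 1) : z.1 ≠ 0 :=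
    ne_of_mem_sphere hz.1 one_ne_zero
  have hHc := hH.smooth.continuousOn.comp continuousOn_fst fun _ hz => hne hz
  have hgradc (c : ℝ) := ((hH.smooth.continuousOn_norm_gradient_sq).comp continuousOn_fst
    fun _ hz => hne hz).const_mul c
  refine hH.eq_one_of_dirDeriv_eq_zero (by linarith) (fun y w hy hyw => ?_) hx
  rcases lt_or_ge p (1 - n) with hpn | hpn
  · have hκ : 0 < (n + 1 + p) * (n - 1) * (-1 - p) / n :=
      div_pos (mul_pos (mul_pos (by linarith) (by linarith)) (by linarith)) (by linarith)
    exact (hH.hasMaximumEstimate_laplacian hn0).dirDeriv_eq_zero hκ hn0 hH ((hHc.mul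
      (hH.smooth.continuousOn_laplacian.comp continuousOn_fst fun _ hz => hne hz)).sub (hgradc _))
      hy hyw
  · have hκ : 0 < (1 - p) / n := div_pos (by linarith) (by linarith)
    exact (hH.hasMaximumEstimate_hessian hn hpn hp1).dirDeriv_eq_zero hκ hn0 hH ((hHc.mul
      (hH.smooth.continuousOn_dirDeriv_dirDeriv.mono fun _ hz => hne hz)).sub (hgradc _)) hy hyw

end ConstantOnSphere

section SupportEquation

lemma exists_isLeast_zero_of_deriv_neg {g g' : ℝ → ℝ} {c : ℝ} (hg : ∀ t, HasDerivAt g (g' t) t)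
    (hg0 : g 0 = 0) (hg'0 : g' 0 < 0) (hc : 0 < c) (hgc : g c = 0) :
    ∃ b ∈ Set.Ioc 0 c, g b = 0 ∧ ∀ t ∈ Set.Ioo 0 b, g t < 0 := by
  have hcont : Continuous g := continuous_iff_continuousAt.2 fun t => (hg t).continuousAt
  have hnear : ∀ᶠ t in 𝓝[>] 0, g t < 0 := by
    filter_upwards [(hasDerivAt_iff_tendsto_slope_left_right.1 (hg 0)).2.eventually_lt_const hg'0,
      self_mem_nhdsWithin] with t ht htpos
    rw [slope_def_field, hg0, sub_zero, sub_zero] at ht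
    exact (div_neg_iff.1 ht).elim (fun h => absurd h.2 (not_lt.2 htpos.le)) And.left
  obtain ⟨ε, hε, hneg⟩ := mem_nhdsGT_iff_exists_Ioo_subset.1 hnear
  have hnegε {t : ℝ} (ht : 0 < t) (htε : t < ε) : g t < 0 := hneg ⟨ht, htε⟩
  have hεc : ε ≤ c := not_lt.1 fun h => (hnegε hc h).ne hgc
  obtain ⟨b, ⟨hb, hgb⟩, hleast⟩ := (isCompact_Icc.inter_right
    (isClosed_singleton.preimage hcont)).exists_isLeast ⟨c, ⟨hεc, le_rfl⟩, hgc⟩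
  have hne {t : ℝ} (ht : t ∈ Set.Ioo 0 b) : g t ≠ 0 := fun h => (lt_or_ge t ε).elim
    (fun htε => (hnegε ht.1 htε).ne h)
    fun htε => ht.2.not_ge (hleast ⟨⟨htε, ht.2.le.trans hb.2⟩, h⟩)
  refine ⟨b, ⟨hε.trans_le hb.1, hb.2⟩, hgb, fun t ht => not_le.1 fun hgt => ?_⟩
  have htε : ε / 2 < t := (half_lt_self hε).trans_le (not_lt.1 fun h => (hnegε ht.1 h).not_ge hgt)
  obtain ⟨r, hr, hgr⟩ := intermediate_value_Icc htε.le hcont.continuousOn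
    ⟨(hnegε (half_pos hε) (half_lt_self hε)).le, hgt⟩
  exact hne ⟨(half_pos hε).trans_le hr.1, hr.2.trans_lt ht.2⟩ hgr

lemma nonneg_of_hasDerivAt_of_forall_le_left {g : ℝ → ℝ} {a b c : ℝ} (hg : HasDerivAt g c b)
    (hab : a < b) (hle : ∀ t ∈ Set.Ioo a b, g t ≤ g b) : 0 ≤ c := by
  refine ge_of_tendsto (hasDerivAt_iff_tendsto_slope_left_right.1 hg).1 ?_
  filter_upwards [Ioo_mem_nhdsLT hab] with t ht
  rw [slope_def_field]
  exact div_nonneg_of_nonpos (sub_nonpos.2 (hle t ht)) (sub_nonpos.2 ht.2.le)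

/-- The Wronskian of `y` and `sin (ω t)` vanishes at `0` and is increasing. -/
lemma sturm_comparison {ω b : ℝ} {y y' y'' : ℝ → ℝ} (hy : ∀ t, HasDerivAt y (y' t) t)
    (hy' : ∀ t, HasDerivAt y' (y'' t) t) (hω : 0 < ω) (hb : 0 < b) (hωb : ω * b ≤ π)
    (hy0 : y 0 = 0) (hyb : y b = 0) (hlt : ∀ t ∈ Set.Ioo 0 b, 0 < y'' t + ω ^ 2 * y t) :
    0 < y' b * sin (ω * b) := by
  have hW (t : ℝ) : HasDerivAt (fun s => y' s * sin (ω * s) - ω * y s * cos (ω * s))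
      ((y'' t + ω ^ 2 * y t) * sin (ω * t)) t := by
    have hlin : HasDerivAt (fun s => ω * s) ω t := by
      simpa using (hasDerivAt_id t).const_mul ω
    exact (((hy' t).mul hlin.sin).sub (((hy t).const_mul ω).mul hlin.cos)).congr_deriv (by ring)
  have hmono := strictMonoOn_of_hasDerivWithinAt_pos (convex_Icc 0 b)
    (fun t _ => (hW t).continuousAt.continuousWithinAt)
    (fun t _ => (hW t).hasDerivWithinAt) fun t ht => by
      rw [interior_Icc] at ht
      exact mul_pos (hlt t ht) (sin_pos_of_pos_of_lt_pi (mul_pos hω ht.1)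
        ((mul_lt_mul_of_pos_left ht.2 hω).trans_le hωb))
  simpa [hy0, hyb] using
    hmono (Set.left_mem_Icc.2 hb.le) (Set.right_mem_Icc.2 hb.le) hb

lemma lipschitzOnWith_rpow_neg {q m : ℝ} (hq : 0 < q) (hm : 0 < m) :
    LipschitzOnWith (q * m ^ (-q - 1)).toNNReal (fun a : ℝ => a ^ (-q)) (Set.Ici m) := by
  refine Convex.lipschitzOnWith_of_nnnorm_hasDerivWithin_le (f' := fun a => -q * a ^ (-q - 1))
    (convex_Ici m) (fun a ha => ?_) fun a ha => ?_
  · exact (hasDerivAt_rpow_const (Or.inl (hm.trans_le ha).ne')).hasDerivWithinAt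
  · have ha0 : 0 ≤ a := hm.le.trans ha
    rw [← NNReal.coe_le_coe, coe_nnnorm, Real.coe_toNNReal _ (by positivity), norm_mul, norm_neg,
      norm_of_nonneg hq.le, norm_of_nonneg (by positivity)]
    exact mul_le_mul_of_nonneg_left (rpow_le_rpow_of_nonpos hm ha (by linarith)) hq.le

/-- Positive solutions of `u'' + u = u ^ (-q)`, the equation satisfied along a great circle by the
support function of a planar body whose curvature is `h ^ q`. -/
structure IsSupportSolution (q : ℝ) (u u' : ℝ → ℝ) : Prop where
  hasDerivAt : ∀ t, HasDerivAt u (u' t) t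
  hasDerivAt_deriv : ∀ t, HasDerivAt u' (u t ^ (-q) - u t) t
  pos : ∀ t, 0 < u t

namespace IsSupportSolution

variable {q m b : ℝ} {u u' w w' : ℝ → ℝ}

lemma comp_add_const (hu : IsSupportSolution q u u') (a : ℝ) :
    IsSupportSolution q (fun t => u (t + a)) fun t => u' (t + a) where
  hasDerivAt t := (hu.hasDerivAt _).comp_add_const t a
  hasDerivAt_deriv t := (hu.hasDerivAt_deriv _).comp_add_const t a
  pos _ := hu.pos _

lemma comp_const_sub (hu : IsSupportSolution q u u') (a : ℝ) :
    IsSupportSolution q (fun t => u (a - t)) fun t => -u' (a - t) where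
  hasDerivAt t := by simpa using (hu.hasDerivAt (a - t)).comp_const_sub a t
  hasDerivAt_deriv t := by simpa using ((hu.hasDerivAt_deriv (a - t)).comp_const_sub a t).fun_neg
  pos _ := hu.pos _

lemma hasDerivAt_rpow (hu : IsSupportSolution q u u') (t : ℝ) :
    HasDerivAt (fun s => u s ^ (-q)) (u' t * -q * u t ^ (-q - 1)) t :=
  (hu.hasDerivAt t).rpow_const (Or.inl (hu.pos t).ne')

lemma eq_of_eq_of_deriv_eq (hu : IsSupportSolution q u u') (hw : IsSupportSolution q w w')
    (hq : 0 < q) (hm : 0 < m) (hmu : ∀ t, m ≤ u t) (hmw : ∀ t, m ≤ w t) {t₀ : ℝ}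
    (h₀ : u t₀ = w t₀) (h₁ : u' t₀ = w' t₀) (t : ℝ) : u' t = w' t := by
  have hfst := (LipschitzWith.prod_fst (α := ℝ) (β := ℝ)).lipschitzOnWith (s := {z | m ≤ z.1})
  have hfield := ((LipschitzWith.prod_snd (α := ℝ) (β := ℝ)).lipschitzOnWith).prodMk
    (((lipschitzOnWith_rpow_neg hq hm).comp hfst fun z hz => hz).sub hfst)
  have hunique := ODE_solution_unique_univ (v := fun _ z => (z.2, z.1 ^ (-q) - z.1))
    (f := fun t => (u t, u' t)) (g := fun t => (w t, w' t)) (t₀ := t₀) (fun _ => hfield)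
    (fun t => ⟨(hu.hasDerivAt t).prodMk (hu.hasDerivAt_deriv t), hmu t⟩)
    (fun t => ⟨(hw.hasDerivAt t).prodMk (hw.hasDerivAt_deriv t), hmw t⟩) (by simp [h₀, h₁])
  exact congrArg Prod.snd (congrFun hunique t)

lemma deriv_reflect (hu : IsSupportSolution q u u') (hq : 0 < q) (hm : 0 < m)
    (hmu : ∀ t, m ≤ u t) (hb : u' b = 0) (t : ℝ) : u' (2 * b - t) = -u' t := by
  have hbb : 2 * b - b = b := by ring
  have heq := hu.eq_of_eq_of_deriv_eq (hu.comp_const_sub (2 * b)) hq hm hmu (fun _ => hmu _)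
    (t₀ := b) (by rw [hbb]) (by rw [hbb, hb, neg_zero]) t
  linarith

lemma deriv_pi_eq_zero (hu : IsSupportSolution q u u') (hq : 0 < q) (hm : 0 < m)
    (hmu : ∀ t, m ≤ u t) (hper : Function.Periodic u (2 * π)) (h0 : u' 0 = 0) : u' π = 0 := by
  have hshift : u' (-π + 2 * π) = u' (-π) := by
    have h := (hu.hasDerivAt (-π + 2 * π)).comp_add_const (-π) (2 * π)
    rw [hper.funext] at h
    exact h.unique (hu.hasDerivAt _)
  have hreflect := hu.deriv_reflect hq hm hmu h0 π
  rw [mul_zero, zero_sub] at hreflect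
  rw [show -π + 2 * π = π by ring] at hshift
  linarith

lemma lt_pi_of_deriv_neg (hu : IsSupportSolution q u u') (hq : 0 < q) (h0 : u' 0 = 0)
    (hb : 0 < b) (hbπ : b ≤ π) (hzero : u' b = 0) (hneg : ∀ t ∈ Set.Ioo 0 b, u' t < 0) :
    b < π := by
  refine lt_of_le_of_ne hbπ fun hbπ => ?_
  have hsturm := sturm_comparison hu.hasDerivAt_deriv
    (fun t => (hu.hasDerivAt_rpow t).sub (hu.hasDerivAt t)) one_pos hb (by rw [one_mul, hbπ]) h0
    hzero fun t ht => by
      have hpos := mul_pos (mul_pos hq (rpow_pos_of_pos (hu.pos t) (-q - 1)))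
        (neg_pos.2 (hneg t ht))
      linarith
  simp [hbπ] at hsturm

lemma pi_div_two_lt_of_deriv_neg (hu : IsSupportSolution q u u') (hq : q < 3) (h0 : u' 0 = 0)
    (hb : 0 < b) (hzero : u' b = 0) (hneg : ∀ t ∈ Set.Ioo 0 b, u' t < 0) : π / 2 < b := by
  by_contra! hbπ
  have hrpow (t : ℝ) : u t ^ (-q) = u t * u t ^ (-q - 1) := by
    rw [rpow_sub_one (hu.pos t).ne', mul_div_cancel₀ _ (hu.pos t).ne']
  have hsturm := sturm_comparison (y := fun t => -(u t * u' t))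
    (fun t => ((hu.hasDerivAt t).mul (hu.hasDerivAt_deriv t)).neg)
    (fun t => (((hu.hasDerivAt_deriv t).mul (hu.hasDerivAt_deriv t)).add ((hu.hasDerivAt t).mul
      ((hu.hasDerivAt_rpow t).sub (hu.hasDerivAt t)))).neg)
    two_pos hb (by linarith) (by simp [h0]) (by simp [hzero]) fun t ht => by
      have hpos := mul_pos (mul_pos (sub_pos.2 hq) (rpow_pos_of_pos (hu.pos t) (-q)))
        (neg_pos.2 (hneg t ht))
      simp only [Pi.sub_apply, hrpow] at hpos ⊢
      linarith
  have hconvex : 0 ≤ u b ^ (-q) - u b := nonneg_of_hasDerivAt_of_forall_le_left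
    (hu.hasDerivAt_deriv b) hb fun t ht => hzero ▸ (hneg t ht).le
  have hsin : 0 ≤ sin (2 * b) := sin_nonneg_of_nonneg_of_le_pi (by linarith) (by linarith)
  have hnonneg := mul_nonneg (mul_nonneg (hu.pos b).le hconvex) hsin
  simp only [hzero] at hsturm
  linarith

lemma deriv_eq_zero_of_isMaxOn (hu : IsSupportSolution q u u') (hq : 0 < q) (hq3 : q < 3)
    (hm : 0 < m) (hmu : ∀ t, m ≤ u t) (hper : Function.Periodic u (2 * π))
    (hmax : ∀ t, u t ≤ u 0) (t : ℝ) : u' t = 0 := by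
  have hlocal : IsLocalMax u 0 := Filter.Eventually.of_forall hmax
  have h0 : u' 0 = 0 := hlocal.hasDerivAt_eq_zero (hu.hasDerivAt 0)
  rcases (deriv_deriv_nonpos_of_isLocalMax (Filter.Eventually.of_forall hu.hasDerivAt)
    (hu.hasDerivAt_deriv 0) hlocal).eq_or_lt with hstat | hconcave
  · have hconst : IsSupportSolution q (fun _ => u 0) fun _ => 0 :=
      ⟨fun _ => hasDerivAt_const _ _, fun t => by rw [hstat]; exact hasDerivAt_const t 0,
        fun _ => hu.pos 0⟩
    exact hu.eq_of_eq_of_deriv_eq hconst hq hm hmu (fun _ => hmu 0) rfl h0 t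
  exfalso
  have hπ := hu.deriv_pi_eq_zero hq hm hmu hper h0
  obtain ⟨b, ⟨hb, hbπ⟩, hzero, hneg⟩ :=
    exists_isLeast_zero_of_deriv_neg hu.hasDerivAt_deriv h0 hconcave pi_pos hπ
  have hbπ := hu.lt_pi_of_deriv_neg hq h0 hb hbπ hzero hneg
  have hπb := hu.pi_div_two_lt_of_deriv_neg hq3 h0 hb hzero hneg
  have hreflect := hu.deriv_reflect hq hm hmu hzero π
  have := hneg (2 * b - π) ⟨by linarith, by linarith⟩
  linarith

lemma deriv_eq_zero (hu : IsSupportSolution q u u') (hq : 0 < q) (hq3 : q < 3)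
    (hper : Function.Periodic u (2 * π)) (t : ℝ) : u' t = 0 := by
  have hcont : Continuous u := continuous_iff_continuousAt.2 fun t => (hu.hasDerivAt t).continuousAt
  have hrange := hper.compact_of_continuous two_pi_pos.ne' hcont
  obtain ⟨-, ⟨a, rfl⟩, hmax⟩ := hrange.exists_isGreatest (Set.range_nonempty u)
  obtain ⟨-, ⟨c, rfl⟩, hmin⟩ := hrange.exists_isLeast (Set.range_nonempty u)
  have hshift := (hu.comp_add_const a).deriv_eq_zero_of_isMaxOn hq hq3 (hu.pos c)
    (fun s => hmin ⟨s + a, rfl⟩) (hper.add_const a)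
    (fun s => by rw [zero_add]; exact hmax ⟨s + a, rfl⟩) (t - a)
  rwa [sub_add_cancel] at hshift

end IsSupportSolution

end SupportEquation

section GreatCircle

variable {E : Type*} [NormedAddCommGroup E] [InnerProductSpace ℝ E] {x e : E} {f : E → ℝ}

/-- The unit speed great circle through `x` with direction `e`. Its velocity is
`greatCircle e (-x)`. -/
def greatCircle (x e : E) (t : ℝ) : E := cos t • x + sin t • e

lemma hasDerivAt_greatCircle (x e : E) (t : ℝ) :
    HasDerivAt (greatCircle x e) (greatCircle e (-x) t) t := by
  refine (((hasDerivAt_cos t).smul_const x).add ((hasDerivAt_sin t).smul_const e)).congr_deriv ?_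
  simp only [greatCircle]
  module

lemma norm_greatCircle (hx : ‖x‖ = 1) (he : ‖e‖ = 1) (hxe : ⟪x, e⟫_ℝ = 0) (t : ℝ) :
    ‖greatCircle x e t‖ = 1 := by
  rw [← sq_eq_sq₀ (norm_nonneg _) zero_le_one, greatCircle, norm_add_sq_real, norm_smul, norm_smul,
    hx, he, inner_smul_left, inner_smul_right, hxe]
  simp

lemma inner_greatCircle_deriv (hx : ‖x‖ = 1) (he : ‖e‖ = 1) (hxe : ⟪x, e⟫_ℝ = 0) (t : ℝ) :
    ⟪greatCircle x e t, greatCircle e (-x) t⟫_ℝ = 0 := by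
  simp only [greatCircle, inner_add_left, inner_add_right, real_inner_smul_left,
    real_inner_smul_right, inner_neg_right, real_inner_self_eq_norm_sq, hx, he, hxe,
    real_inner_comm x e]
  ring

lemma SmoothOffZero.hasDerivAt_greatCircle (hf : SmoothOffZero f) {t : ℝ}
    (ht : greatCircle x e t ≠ 0) : HasDerivAt (fun s => f (greatCircle x e s))
      (∂[greatCircle e (-x) t] f (greatCircle x e t)) t :=
  (hf.differentiableAt ht).hasFDerivAt.comp_hasDerivAt t (_root_.hasDerivAt_greatCircle x e t)

lemma PosHomogeneous.hasDerivAt_dirDeriv_greatCircle (h : PosHomogeneous 1 f)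
    (hf : SmoothOffZero f) {t : ℝ} (ht : greatCircle x e t ≠ 0) :
    HasDerivAt (fun s => ∂[greatCircle e (-x) s] f (greatCircle x e s))
      (∂[greatCircle e (-x) t] (∂[greatCircle e (-x) t] f) (greatCircle x e t)
        - f (greatCircle x e t)) t := by
  have hacc : greatCircle (-x) (-e) t = -greatCircle x e t := by simp [greatCircle, add_comm]
  have hfderiv := ((hf.differentiableAt_fderiv ht).hasFDerivAt.comp_hasDerivAt t
    (hasDerivAt_greatCircle x e t)).clm_apply (hasDerivAt_greatCircle e (-x) t)
  refine hfderiv.congr_deriv ?_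
  rw [hacc, map_neg, ← sub_eq_add_neg, hf.dirDeriv_dirDeriv_eq_fderiv _ _ ht]
  congr 1
  exact (h.dirDeriv_self hf ht).trans (by simp)

variable {p : ℝ} {H : Eu 1 → ℝ}

lemma IsMongeAmpereSolution.dirDeriv_dirDeriv_eq_rpow (hH : IsMongeAmpereSolution p H)
    {x e : Eu 1} (hx : ‖x‖ = 1) (he : ‖e‖ = 1) (hxe : ⟪x, e⟫_ℝ = 0) :
    ∂[e] (∂[e] H) x = H x ^ (p - 1) := by
  obtain ⟨b, hb0, hb⟩ := exists_orthonormalBasis_cons (n := 1) (e := fun _ => e) (by simp) hx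
    (by simpa [orthonormal_iff_ite] using he) fun _ => hxe
  have hdet := hH.det_eq b hx
  rwa [Matrix.det_unique, hessianMatrix_apply, Function.comp_apply, hb, hb0,
    real_inner_self_eq_norm_sq, hx, one_pow, one_pow, one_mul] at hdet

lemma IsMongeAmpereSolution.isSupportSolution (hH : IsMongeAmpereSolution p H) {x e : Eu 1}
    (hx : ‖x‖ = 1) (he : ‖e‖ = 1) (hxe : ⟪x, e⟫_ℝ = 0) :
    IsSupportSolution (1 - p) (fun t => H (greatCircle x e t))
      fun t => ∂[greatCircle e (-x) t] H (greatCircle x e t) := by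
  have hnorm := norm_greatCircle hx he hxe
  have hne (t : ℝ) : greatCircle x e t ≠ 0 := norm_ne_zero_iff.1 (hnorm t ▸ one_ne_zero)
  have hvel := norm_greatCircle he ((norm_neg x).trans hx)
    (by rw [inner_neg_right, real_inner_comm, hxe, neg_zero])
  refine ⟨fun t => hH.smooth.hasDerivAt_greatCircle (hne t), fun t => ?_, fun t => hH.pos (hne t)⟩
  rw [neg_sub, ← hH.dirDeriv_dirDeriv_eq_rpow (hnorm t) (hvel t)
    (inner_greatCircle_deriv hx he hxe t)]
  exact hH.posHomogeneous.hasDerivAt_dirDeriv_greatCircle hH.smooth (hne t)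

lemma IsMongeAmpereSolution.eq_one_of_dim_eq_one (hp : -2 < p) (hp1 : p < 1)
    (hH : IsMongeAmpereSolution p H) {x : Eu 1} (hx : ‖x‖ = 1) : H x = 1 := by
  refine hH.eq_one_of_dirDeriv_eq_zero (by push_cast; linarith) (fun y w hy hyw => ?_) hx
  have hzero {e : Eu 1} (he : ‖e‖ = 1) (hye : ⟪y, e⟫_ℝ = 0) : ∂[e] H y = 0 := by
    have hderiv := (hH.isSupportSolution hy he hye).deriv_eq_zero (by linarith) (by linarith)
      (fun t => by simp [greatCircle]) 0
    simpa [greatCircle] using hderiv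
  rcases eq_or_ne w 0 with rfl | hw
  · simp [dirDeriv]
  · have hunit := hzero (norm_smul_inv_norm (𝕜 := ℝ) hw) (by rw [inner_smul_right, hyw, mul_zero])
    rw [dirDeriv_smul_dir] at hunit
    exact (mul_eq_zero.1 hunit).resolve_left (inv_ne_zero (norm_ne_zero_iff.2 hw))

end GreatCircle

section UnitBall

variable {n : ℕ} {K L : Set (Eu n)}

lemma subset_of_sfn_le (hK : Bornology.IsBounded K) (hL : IsClosed L) (hconvex : Convex ℝ L)
    (hne : L.Nonempty) (hle : ∀ z, sfn K z ≤ sfn L z) : K ⊆ L := by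
  intro y hy
  by_contra hyL
  obtain ⟨φ, c, hφL, hφy⟩ := geometric_hahn_banach_closed_point hconvex hL hyL
  obtain ⟨a, rfl⟩ := (InnerProductSpace.toDual ℝ (Eu n)).surjective φ
  have hsfnL : sfn L a ≤ c := csSup_le (hne.image _)
    (Set.forall_mem_image.2 fun z hz => (hφL z hz).le)
  have hyK : ⟪a, y⟫_ℝ ≤ sfn K a := le_csSup
    ((innerSL ℝ a).lipschitz.isBounded_image hK).bddAbove ⟨y, hy, rfl⟩
  exact ((hyK.trans (hle a)).trans hsfnL).not_gt hφy

lemma eq_of_sfn_eq (hK : IsCompact K) (hKconvex : Convex ℝ K) (hKne : K.Nonempty)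
    (hL : IsCompact L) (hLconvex : Convex ℝ L) (hLne : L.Nonempty)
    (heq : ∀ z, sfn K z = sfn L z) : K = L :=
  (subset_of_sfn_le hK.isBounded hL.isClosed hLconvex hLne fun z => (heq z).le).antisymm
    (subset_of_sfn_le hL.isBounded hK.isClosed hKconvex hKne fun z => (heq z).ge)

lemma sfn_closedBall_one (z : Eu n) : sfn (closedBall 0 1) z = ‖z‖ := by
  refine IsGreatest.csSup_eq ⟨⟨‖z‖⁻¹ • z, ?_, ?_⟩, Set.forall_mem_image.2 fun y hy => ?_⟩
  · rw [mem_closedBall_zero_iff, norm_smul, norm_inv, norm_norm]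
    exact inv_mul_le_one
  · simp only [real_inner_smul_right, real_inner_self_eq_norm_mul_norm, ← mul_assoc,
      inv_mul_mul_self]
  · exact (real_inner_le_norm z y).trans
      (mul_le_of_le_one_right (norm_nonneg z) (mem_closedBall_zero_iff.1 hy))

lemma sfn_eq_norm_of_eq_one (hK : ∀ x : Eu n, ‖x‖ = 1 → sfn K x = 1) (z : Eu n) :
    sfn K z = ‖z‖ := by
  rcases eq_or_ne z 0 with rfl | hz
  · rcases K.eq_empty_or_nonempty with rfl | hne
    · simp [sfn]
    · simp [sfn, hne]
  · have hunit := hK (‖z‖⁻¹ • z) (norm_smul_inv_norm (𝕜 := ℝ) hz)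
    rw [posHomogeneous_sfn K z hz _ (by positivity), zpow_one] at hunit
    exact (inv_mul_eq_one₀ (norm_ne_zero_iff.2 hz)).1 hunit |>.symm

end UnitBall

/-- **Uniqueness for `𝒦 = h^{1−p}`, `p ∈ (−n−1, 1)`.** If a smooth, strictly convex
body satisfies `det(A(x)+x⊗x) = h(x)^{p−1}` on `S^n`, then `K` is the closed unit ball. -/
theorem unit_ball_of_Lp_self_similar (n : ℕ) (hn : 1 ≤ n) (p : ℝ)
    (hp : p ∈ Set.Ioo (-(n : ℝ) - 1) 1)
    (K : Set (Eu n)) (hK : IsSmoothConvexBody K)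
    (heq : ∀ x : Sph n, rK K (x : Eu n) = sfn K (x : Eu n) ^ (p - 1)) :
    K = Metric.closedBall (0 : Eu n) 1 ∧ ∀ z : Eu n, sfn K z = ‖z‖ := by
  have hH := hK.isMongeAmpereSolution heq
  have hone (x : Eu n) (hx : ‖x‖ = 1) : sfn K x = 1 := by
    rcases hn.eq_or_lt with rfl | hn2
    · exact hH.eq_one_of_dim_eq_one (by linarith [hp.1, Nat.cast_one (R := ℝ)]) hp.2 hx
    · exact hH.eq_one_of_two_le hn2 hp.1 hp.2 hx
  have hnorm := sfn_eq_norm_of_eq_one hone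
  refine ⟨eq_of_sfn_eq hK.compact hK.convex (hK.interior_nonempty.mono interior_subset)
    (isCompact_closedBall 0 1) (convex_closedBall 0 1) (nonempty_closedBall.2 zero_le_one)
    fun z => ?_, hnorm⟩
  rw [hnorm, sfn_closedBall_one]
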